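/- Let α ∈ (0,1), T > 0, and u₀ ∈ L²(0,1). Then there exist a continuous map u : [0,T] → L²(0,1) with u(0) = u₀ and, for each t ∈ (0,T], a function w_t ∈ L²(0,1), such that: (i) for each t ∈ (0,T] the pair (U_t, w_t) is in the graph of A = (d/dx)D^α for some representative U_t of u(t) (i.e. U_t is absolutely continuous on [0,1], U_t(1) = 0, and U_t′ = I^α w_t a.e.); (ii) the map t ↦ u(t) is differentiable in L²(0,1) at every t ∈ (0,T] with derivative w_t (so u solves u_t = (d/dx)D^α u with u_x(0,t) = 0, u(1,t) = 0, u(·,0) = u₀); and (iii) there is a constant c > 0, independent of u₀, with ‖u(t)‖_{L²(0,1)} + t ‖w_t‖_{L²(0,1)} ≤ c ‖u₀‖_{L²(0,1)} for all t ∈ (0,T]. -/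

import Mathlib

/-!
The operator `A = (d/dx) D^α` with its two boundary conditions is invertible, and `A⁻¹ = -P` with
`P` the bounded integral operator on `L²(0,1)` whose kernel is
`((1 - p)^α - (x - p)₊^α) / Γ(α + 1)` (`potCLM`); indeed `-P w` is the primitive of `I^α w`
vanishing at `1` (`integral_fracInt`, `inGraphA_pot`). So it suffices to solve `P u' = -u`, and this
works, with the smoothing estimate, once `P` has dense range and its numerical range lies in a
sector `m |Im| ≤ Re` with `m > 0`.

*Sector.* For `ν = 1 ± i` and `b ≥ 0`, scaling gives
`∫₀^∞ s^(-α-1) (1 - exp (-ν s b)) ds = Z b^α` with `Z = Z(ν)` (`lapInt_scale`). Hence, up to a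
positive factor, `Z ⟨w, P w⟩` is a superposition over `s > 0` of the quadratic forms with kernel
`exp (-λ (x - p)₊) - exp (-λ (1 - p)₊)`, `λ = ν s`. Each of these has nonnegative real part when
`Re λ ≥ 0` (`re_energy_nonneg`): with `h' = w - λ h`, `h(0) = 0`, integration by parts rewrites its
real part as half of `|λ ∫₀¹ h|²` plus `Re λ ∫ |h|²`. Thus `Re (Z ⟨w, P w⟩) ≥ 0` for both
`Z(1 + i)` and its conjugate, which is the sector condition with `m = Im Z / Re Z`. Both parts of
`Z(1 + i)` are positive (`lapInt_re_pos`, `lapInt_im_pos`).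

*Dense range.* Testing `y ⊥ range P` against monomials shows that the moments of
`x^(α+1) conj (y x)` do not depend on their order; they tend to `0`, so all vanish, and `y = 0`.

*Abstract part* (`exists_analytic_orbit`). The Yosida approximations `Bₙ = (P + εₙ)⁻¹` generate
operators `exp (-z Bₙ)` that are contractions for `|Im z| ≤ m Re z`. They converge locally uniformly
there on the range of `P²`, hence strongly, and the limit is holomorphic inside the sector. A Cauchy
estimate on the circle of radius `m t / (1 + m)` about `t` bounds `t ‖u'(t)‖`.
-/

open MeasureTheory Set Filter

/-- Riemann–Liouville fractional integral `I^γ f` on `(0,1)` (complex-valued),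
with the convention `I⁰ f = f`. -/
noncomputable def fracInt (γ : ℝ) (f : ℝ → ℂ) (x : ℝ) : ℂ :=
  if γ = 0 then f x
  else ((Real.Gamma γ)⁻¹ : ℝ) • ∫ p in (0:ℝ)..x, (((x - p) ^ (γ - 1) : ℝ) : ℂ) * f p

/-- `f` is square integrable (and a.e. strongly measurable) on `(0,1)`: `f ∈ L²(0,1)`. -/
def SqIntOn (f : ℝ → ℂ) : Prop :=
  MeasureTheory.AEStronglyMeasurable f (MeasureTheory.volume.restrict (Set.Ioc (0:ℝ) 1)) ∧
  MeasureTheory.IntegrableOn (fun x => ‖f x‖ ^ 2) (Set.Ioc (0:ℝ) 1)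

/-- `(u, w)` lies in the graph of `A = (d/dx) D^α`:  `u` is absolutely continuous on `[0,1]`
with `u' = I^α w` a.e., `u(1) = 0`, and `w ∈ L²(0,1)`; then `A u = w`. -/
def InGraphA (α : ℝ) (u w : ℝ → ℂ) : Prop :=
  u 1 = 0 ∧ SqIntOn w ∧
  IntervalIntegrable (fracInt α w) MeasureTheory.volume 0 1 ∧
  ∀ x ∈ Set.Icc (0:ℝ) 1, u x = u 0 + ∫ t in (0:ℝ)..x, fracInt α w t

/-- Square of the `L²(0,1)` norm. -/
noncomputable def L2normSq (f : ℝ → ℂ) : ℝ := ∫ x in (0:ℝ)..1, ‖f x‖ ^ 2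

/-- Square of the Gagliardo seminorm of order `s` on `(0,1)`. -/
noncomputable def sobSeminormSq (s : ℝ) (u : ℝ → ℂ) : ℝ :=
  ∫ x in (0:ℝ)..1, ∫ y in (0:ℝ)..1, ‖u x - u y‖ ^ 2 / |x - y| ^ (1 + 2 * s)

/-- Square of the fractional Sobolev `H^s(0,1)` norm `N_s(u)`. -/
noncomputable def sobNormSq (s : ℝ) (u : ℝ → ℂ) : ℝ :=
  L2normSq u + sobSeminormSq s u

/-! ### Orbits generated by the inverse of a sectorial operator -/

section Abstract

open scoped Topology InnerProductSpace

variable {H : Type*} [NormedAddCommGroup H] [InnerProductSpace ℂ H] [CompleteSpace H]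

lemma hasDerivAt_exp_apply (B : H →L[ℂ] H) (x : H) (s : ℝ) :
    HasDerivAt (fun s : ℝ => NormedSpace.exp (s • B) x) (B (NormedSpace.exp (s • B) x)) s := by
  have h1 := hasDerivAt_exp_smul_const' (𝕂 := ℝ) B s
  exact ((ContinuousLinearMap.apply ℂ H x).restrictScalars ℝ).hasFDerivAt.comp_hasDerivAt s h1

/-- A bounded dissipative operator generates a contraction semigroup. -/
lemma norm_exp_le (B : H →L[ℂ] H) (hB : ∀ x, (⟪x, B x⟫_ℂ).re ≤ 0) {r : ℝ} (hr : 0 ≤ r)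
    (x : H) : ‖NormedSpace.exp (r • B) x‖ ≤ ‖x‖ := by
  have hn : ∀ s : ℝ, HasDerivAt (fun s : ℝ => ‖NormedSpace.exp (s • B) x‖ ^ 2)
      (2 * (⟪NormedSpace.exp (s • B) x, B (NormedSpace.exp (s • B) x)⟫_ℂ).re) s := by
    intro s
    have h1 := ((hasDerivAt_exp_apply B x s).inner ℂ (hasDerivAt_exp_apply B x s))
    have h2 := Complex.reCLM.hasFDerivAt.comp_hasDerivAt s h1
    have h3 : ∀ v, (⟪B v, v⟫_ℂ).re = (⟪v, B v⟫_ℂ).re := fun v => by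
      rw [← inner_conj_symm]; simp only [Complex.conj_re]
    have h4 : (⇑Complex.reCLM ∘ fun t : ℝ =>
        ⟪(NormedSpace.exp (t • B)) x, (NormedSpace.exp (t • B)) x⟫_ℂ) =
        (fun s : ℝ => ‖NormedSpace.exp (s • B) x‖ ^ 2) := by
      ext u
      exact inner_self_eq_norm_sq (𝕜 := ℂ) (NormedSpace.exp (u • B) x)
    rw [h4] at h2
    refine h2.congr_deriv ?_
    simp only [Complex.reCLM_apply, Complex.add_re, h3]
    ring
  have hanti : AntitoneOn (fun s : ℝ => ‖NormedSpace.exp (s • B) x‖ ^ 2) univ := by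
    refine antitoneOn_of_deriv_nonpos convex_univ
      (fun s _ => (hn s).continuousAt.continuousWithinAt)
      (fun s _ => (hn s).differentiableAt.differentiableWithinAt) (fun s _ => ?_)
    rw [(hn s).deriv]
    have := hB (NormedSpace.exp (s • B) x)
    linarith
  have h := hanti (mem_univ 0) (mem_univ r) hr
  simp only [zero_smul, NormedSpace.exp_zero] at h
  exact (sq_le_sq₀ (norm_nonneg _) (norm_nonneg _)).1 (by simpa using h)

/-- For commuting dissipative operators, differentiating `exp (r A) exp ((1 - r) B) x` in `r` compares
the two exponentials. -/
lemma norm_exp_sub_exp_le (A B : H →L[ℂ] H) (hAB : Commute A B)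
    (hA : ∀ x, (⟪x, A x⟫_ℂ).re ≤ 0) (hB : ∀ x, (⟪x, B x⟫_ℂ).re ≤ 0) (x : H) :
    ‖NormedSpace.exp A x - NormedSpace.exp B x‖ ≤ ‖(A - B) x‖ := by
  let f : ℝ → H := fun r => NormedSpace.exp (r • A) (NormedSpace.exp ((1 - r) • B) x)
  have hd : ∀ r : ℝ, HasDerivAt f (NormedSpace.exp (r • A)
      (NormedSpace.exp ((1 - r) • B) ((A - B) x))) r := by
    intro r
    have h1 := hasDerivAt_exp_smul_const (𝕂 := ℝ) A r
    have h2 := (hasDerivAt_exp_smul_const' (𝕂 := ℝ) B (1 - r))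
    have h3 := h2.scomp r ((hasDerivAt_id r).const_sub 1)
    have h4 := h1.mul h3
    have h5 := (((ContinuousLinearMap.apply ℂ H x).restrictScalars ℝ).hasFDerivAt.comp_hasDerivAt r h4)
    have hc : A * NormedSpace.exp ((1 - r) • B) = NormedSpace.exp ((1 - r) • B) * A :=
      ((hAB.smul_right _).exp_right).eq
    have hc' : B * NormedSpace.exp ((1 - r) • B) = NormedSpace.exp ((1 - r) • B) * B :=
      (((Commute.refl B).smul_right _).exp_right).eq
    refine HasDerivAt.congr_deriv h5 ?_
    have hc1 := congrArg (fun T : H →L[ℂ] H => T x) hc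
    have hc2 := congrArg (fun T : H →L[ℂ] H => T x) hc'
    simp only [mul_apply_eq_comp] at hc1 hc2
    simp only [ContinuousLinearMap.coe_restrictScalars', ContinuousLinearMap.apply_apply,
      add_apply, mul_apply_eq_comp, Function.comp_apply, neg_smul, one_smul, neg_apply, hc1, hc2,
      mul_neg, map_sub, sub_apply]
    abel
  have h := norm_image_sub_le_of_norm_deriv_le_segment_01' (f := f) (C := ‖(A - B) x‖)
    (fun r _ => (hd r).hasDerivWithinAt) (fun r hr => ?_)
  · simpa [f] using h
  · exact (norm_exp_le A hA hr.1 _).trans (norm_exp_le B hB (by linarith [hr.2]) _)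

lemma exists_resolvent (P : H →L[ℂ] H) (hP : ∀ x, 0 ≤ (⟪x, P x⟫_ℂ).re) {ε : ℝ} (hε : 0 < ε) :
    ∃ B : H →L[ℂ] H, (P + (ε : ℂ) • 1) * B = 1 ∧ B * (P + (ε : ℂ) • 1) = 1 := by
  have hu : IsUnit (P + (ε : ℂ) • (1 : H →L[ℂ] H)) := by
    refine ContinuousLinearMap.isUnit_of_forall_le_norm_inner_map _ (c := ⟨ε, hε.le⟩) hε fun x => ?_
    have h1 : (⟪(P + (ε : ℂ) • (1 : H →L[ℂ] H)) x, x⟫_ℂ).re = (⟪x, P x⟫_ℂ).re + ε * ‖x‖ ^ 2 := by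
      rw [← inner_conj_symm, Complex.conj_re]
      have : (⟪x, x⟫_ℂ).re = ‖x‖ ^ 2 := inner_self_eq_norm_sq (𝕜 := ℂ) x
      rw [← this, add_apply, inner_add_right, smul_apply,
        one_apply_eq_self, inner_smul_right, Complex.add_re,
        Complex.re_ofReal_mul]
    calc ‖x‖ ^ 2 * ε ≤ (⟪x, P x⟫_ℂ).re + ε * ‖x‖ ^ 2 := by linarith [hP x]
      _ = _ := h1.symm
      _ ≤ _ := Complex.re_le_norm _
  obtain ⟨V, hV⟩ := hu
  exact ⟨↑V⁻¹, by rw [← hV]; simp, by rw [← hV]; simp⟩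

/-- Yosida approximations `Bₙ = (P + εₙ)⁻¹` of the (unbounded) inverse of `P`. They commute, and
`-z Bₙ` is dissipative for every `z` in the sector `|Im z| ≤ m Re z`, because the numerical range of
`Bₙ` lies in the sector `m |Im| ≤ Re` as that of `P` does. -/
lemma exists_approx (P : H →L[ℂ] H) {m : ℝ} (hm : 0 < m)
    (hP : ∀ x, m * |(⟪x, P x⟫_ℂ).im| ≤ (⟪x, P x⟫_ℂ).re) :
    ∃ (B : ℕ → H →L[ℂ] H) (ε : ℕ → ℝ), (∀ n, 0 < ε n) ∧ Tendsto ε atTop (𝓝 0) ∧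
      (∀ n, P * B n = 1 - (ε n : ℂ) • B n) ∧ (∀ n, B n * P = 1 - (ε n : ℂ) • B n) ∧
      (∀ n k, Commute (B n) (B k)) ∧ (∀ n x, ‖(ε n : ℂ) • B n x‖ ≤ ‖x‖) ∧
      ∀ n, ∀ z : ℂ, |z.im| ≤ m * z.re → ∀ x, (⟪x, (-(z • B n)) x⟫_ℂ).re ≤ 0 := by
  have hP0 : ∀ x, 0 ≤ (⟪x, P x⟫_ℂ).re := fun x => le_trans (by positivity) (hP x)
  let ε : ℕ → ℝ := fun n => 1 / ((n : ℝ) + 1)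
  have hε : ∀ n, 0 < ε n := fun n => by positivity
  choose B hB1 hB2 using fun n => exists_resolvent P hP0 (hε n)
  -- `y = P (B y) + ε B y`, paired with `B y`, expresses the form of `B` by that of `P`
  have hsplit : ∀ n y, ⟪y, B n y⟫_ℂ =
      (starRingEnd ℂ) ⟪B n y, P (B n y)⟫_ℂ + ((ε n * ‖B n y‖ ^ 2 : ℝ) : ℂ) := by
    intro n y
    have h1 : y = P (B n y) + (ε n : ℂ) • B n y := by
      have := congrArg (fun T : H →L[ℂ] H => T y) (hB1 n)
      simpa using this.symm
    have h2 := inner_self_eq_norm_sq_to_K (𝕜 := ℂ) (B n y)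
    have h3 := congrArg (fun v => ⟪v, B n y⟫_ℂ) h1
    simp only [inner_add_left, inner_smul_left, h2] at h3
    rw [inner_conj_symm, h3]
    simp
  refine ⟨B, ε, hε, tendsto_one_div_add_atTop_nhds_zero_nat, fun n => ?_, fun n => ?_,
    fun n k => ?_, fun n x => ?_, fun n z hz x => ?_⟩
  · rw [← hB1 n, add_mul]; simp
  · rw [← hB2 n, mul_add]; simp
  · have h1 : Commute (P + (ε n : ℂ) • 1) (P + (ε k : ℂ) • (1 : H →L[ℂ] H)) := by
      refine ((Commute.refl P).add_right ?_).add_left ?_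
      · exact (Commute.one_right P).smul_right _
      · exact (Commute.one_left _).smul_left _
    have h2 : Commute (B n) (P + (ε k : ℂ) • (1 : H →L[ℂ] H)) := by
      have := congrArg (fun T => B n * T * B n) h1.eq
      simp only [← mul_assoc, hB2, one_mul] at this
      rw [mul_assoc, mul_assoc, hB1, mul_one] at this
      exact this.symm
    have := congrArg (fun T => B k * T * B k) h2.eq
    simp only [← mul_assoc, hB2, one_mul] at this
    rw [mul_assoc, mul_assoc, hB1, mul_one] at this
    exact this.symm
  · by_cases h0 : ‖B n x‖ = 0
    · rw [norm_smul, h0, mul_zero]; exact norm_nonneg _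
    have h1 := congrArg Complex.re (hsplit n x)
    rw [Complex.add_re, Complex.conj_re, Complex.ofReal_re] at h1
    have h2 : ε n * ‖B n x‖ ^ 2 ≤ ‖x‖ * ‖B n x‖ := by
      calc _ ≤ (⟪x, B n x⟫_ℂ).re := by linarith [hP0 (B n x)]
        _ ≤ ‖⟪x, B n x⟫_ℂ‖ := Complex.re_le_norm _
        _ ≤ _ := norm_inner_le_norm _ _
    rw [norm_smul, Complex.norm_real, Real.norm_of_nonneg (hε n).le]
    have : 0 < ‖B n x‖ := lt_of_le_of_ne (norm_nonneg _) (Ne.symm h0)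
    exact le_of_mul_le_mul_right (by linarith) this
  · have h1 := congrArg Complex.re (hsplit n x)
    have h2 := congrArg Complex.im (hsplit n x)
    rw [Complex.add_re, Complex.conj_re, Complex.ofReal_re] at h1
    rw [Complex.add_im, Complex.conj_im, Complex.ofReal_im, add_zero] at h2
    have h3 := hP (B n x)
    have h4 : 0 ≤ ε n * ‖B n x‖ ^ 2 := by have := hε n; positivity
    have h5 : m * |(⟪x, B n x⟫_ℂ).im| ≤ (⟪x, B n x⟫_ℂ).re := by
      rw [h1, h2, abs_neg]; linarith
    rw [neg_apply, smul_apply, inner_neg_right,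
      inner_smul_right, Complex.neg_re, Complex.mul_re]
    have h6 : z.im * (⟪x, B n x⟫_ℂ).im ≤ |z.im| * |(⟪x, B n x⟫_ℂ).im| := by
      rw [← abs_mul]; exact le_abs_self _
    have h7 : |z.im| * |(⟪x, B n x⟫_ℂ).im| ≤ m * z.re * |(⟪x, B n x⟫_ℂ).im| :=
      mul_le_mul_of_nonneg_right hz (abs_nonneg _)
    have h8 : 0 ≤ z.re := by
      have := (abs_nonneg _).trans hz
      exact nonneg_of_mul_nonneg_right this hm
    have h9 := mul_le_mul_of_nonneg_left h5 h8
    nlinarith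

/-- If the numerical range of `P` lies in the sector `m |Im| ≤ Re` and `P` has dense range, then for
every initial value `x` there is a solution of `P u' = -u`, `u 0 = x`, differentiable for `t > 0`,
whose derivative obeys the smoothing bound `t ‖u'(t)‖ ≤ (1 + m) / m ‖x‖`. -/
theorem exists_analytic_orbit (P : H →L[ℂ] H) {m : ℝ} (hm : 0 < m)
    (hP : ∀ x, m * |(⟪x, P x⟫_ℂ).im| ≤ (⟪x, P x⟫_ℂ).re) (hd : DenseRange P) (x : H) :
    ∃ u w : ℝ → H, ContinuousOn u (Ici 0) ∧ u 0 = x ∧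
      (∀ t, 0 < t → P (w t) = -u t) ∧ (∀ t, 0 < t → HasDerivAt u (w t) t) ∧
      ∀ t, 0 < t → ‖u t‖ + t * ‖w t‖ ≤ (1 + (1 + m) / m) * ‖x‖ := by
  obtain ⟨B, ε, hε, hε0, hPB, hBP, hcomm, hεB, hacc⟩ := exists_approx P hm hP
  -- the closed sector on which all approximations are contractive
  set C : Set ℂ := {z | |z.im| ≤ m * z.re} with hC
  have hCreal : ∀ t : ℝ, 0 ≤ t → (t : ℂ) ∈ C := fun t ht => by
    simp only [hC, mem_ofPred_eq, Complex.ofReal_im, abs_zero, Complex.ofReal_re]; positivity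
  let E : ℕ → ℂ → H → H := fun n z y => NormedSpace.exp (z • (-B n)) y
  have hE1 : ∀ n, ∀ z ∈ C, ∀ y, ‖E n z y‖ ≤ ‖y‖ := by
    intro n z hz y
    have := norm_exp_le (-(z • B n)) (hacc n z hz) zero_le_one y
    simpa [E] using this
  have hEd : ∀ n y z, HasDerivAt (fun z => E n z y) (-B n (E n z y)) z := by
    intro n y z
    have h1 := hasDerivAt_exp_smul_const' (𝕂 := ℂ) (-B n) z
    have h2 := (ContinuousLinearMap.apply ℂ H y).hasFDerivAt.comp_hasDerivAt z h1
    exact h2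
  have hEsub : ∀ n y v z, E n z y - E n z v = E n z (y - v) := fun n y v z => by simp [E]
  -- on vectors `P (P v)` the difference of two approximations is of order `εₙ + εₖ`
  have hdiff : ∀ n k, ∀ z ∈ C, ∀ v, ‖E n z (P (P v)) - E k z (P (P v))‖
      ≤ ‖z‖ * (2 * (ε n + ε k) * ‖v‖) := by
    intro n k z hz v
    have h1 := norm_exp_sub_exp_le (-(z • B n)) (-(z • B k))
      (Commute.neg_left (Commute.neg_right (((hcomm n k).smul_left z).smul_right z))) (hacc n z hz) (hacc k z hz) (P (P v))
    have hBP' : ∀ j y, B j (P y) = y - (ε j : ℂ) • B j y := fun j y => by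
      have := congrArg (fun T : H →L[ℂ] H => T y) (hBP j)
      simpa using this
    have hj : ∀ j, ‖(ε j : ℂ) • (v - (ε j : ℂ) • B j v)‖ ≤ 2 * ε j * ‖v‖ := fun j => by
      rw [norm_smul, Complex.norm_real, Real.norm_of_nonneg (hε j).le]
      have := norm_sub_le v ((ε j : ℂ) • B j v)
      have := hεB j v
      nlinarith [hε j]
    have h2 : (-(z • B n) - -(z • B k)) (P (P v)) =
        z • ((ε n : ℂ) • (v - (ε n : ℂ) • B n v) - (ε k : ℂ) • (v - (ε k : ℂ) • B k v)) := by
      simp only [sub_apply, neg_apply, smul_apply, hBP']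
      module
    rw [h2, norm_smul] at h1
    have h3 := norm_sub_le ((ε n : ℂ) • (v - (ε n : ℂ) • B n v)) ((ε k : ℂ) • (v - (ε k : ℂ) • B k v))
    have h4 : ‖E n z (P (P v)) - E k z (P (P v))‖ = ‖NormedSpace.exp (-(z • B n)) (P (P v))
        - NormedSpace.exp (-(z • B k)) (P (P v))‖ := by simp [E]
    rw [h4]
    refine h1.trans (mul_le_mul_of_nonneg_left ?_ (norm_nonneg z))
    linarith [hj n, hj k]
  have hd2 : DenseRange (fun v => P (P v)) := hd.comp hd P.continuous
  have hcauchy : ∀ R : ℝ, UniformCauchySeqOn (fun n z => E n z x) atTop (C ∩ Metric.ball 0 R) := by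
    intro R
    rw [Metric.uniformCauchySeqOn_iff]
    intro δ hδ
    obtain ⟨v, hv⟩ := hd2.exists_dist_lt x (show 0 < δ / 4 by positivity)
    have h1 : Tendsto (fun n => |R| * (2 * (2 * ε n) * ‖v‖)) atTop (𝓝 0) := by
      have := ((((hε0.const_mul 2).const_mul 2).mul_const ‖v‖).const_mul |R|)
      simpa using this
    have h2 : ∀ᶠ n in atTop, |R| * (2 * (2 * ε n) * ‖v‖) < δ / 2 :=
      h1.eventually (gt_mem_nhds (by positivity))
    obtain ⟨N, hN⟩ := eventually_atTop.1 h2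
    refine ⟨N, fun n hn k hk z hz => ?_⟩
    have hzR : ‖z‖ ≤ |R| := by
      have := hz.2
      rw [mem_ball_zero_iff] at this
      exact this.le.trans (le_abs_self R)
    have ha := hE1 n z hz.1 (x - P (P v))
    have hb := hE1 k z hz.1 (x - P (P v))
    have hc := hdiff n k z hz.1 v
    rw [← hEsub] at ha hb
    rw [dist_eq_norm] at hv ⊢
    have hc' : ‖z‖ * (2 * (ε n + ε k) * ‖v‖) < δ / 2 := by
      have hn' := hN n hn
      have hk' := hN k hk
      have : ‖z‖ * (2 * (ε n + ε k) * ‖v‖) ≤ |R| * (2 * (ε n + ε k) * ‖v‖) := by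
        have := hε n
        have := hε k
        gcongr
      linarith
    have hsum : E n z x - E k z x = (E n z x - E n z (P (P v))) +
        (E n z (P (P v)) - E k z (P (P v))) - (E k z x - E k z (P (P v))) := by abel
    rw [hsum]
    refine (norm_sub_le _ _).trans_lt ?_
    have := norm_add_le (E n z x - E n z (P (P v))) (E n z (P (P v)) - E k z (P (P v)))
    linarith
  -- the limit orbit
  have hlim : ∀ z ∈ C, ∃ y, Tendsto (fun n => E n z x) atTop (𝓝 y) := fun z hz =>
    cauchySeq_tendsto_of_complete ((hcauchy (‖z‖ + 1)).cauchySeq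
      ⟨hz, by rw [mem_ball_zero_iff]; linarith⟩)
  choose! S hS using hlim
  have hunif : ∀ R : ℝ, TendstoUniformlyOn (fun n z => E n z x) S atTop (C ∩ Metric.ball 0 R) :=
    fun R => (hcauchy R).tendstoUniformlyOn_of_tendsto fun z hz => hS z hz.1
  set U : Set ℂ := {z | |z.im| < m * z.re} with hU
  have hUC : U ⊆ C := fun z hz => by
    simp only [hU, hC, mem_ofPred_eq] at hz ⊢; exact hz.le
  have hUo : IsOpen U := isOpen_lt (by fun_prop) (by fun_prop)
  have hUreal : ∀ t : ℝ, 0 < t → (t : ℂ) ∈ U := fun t ht => by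
    simp only [hU, mem_ofPred_eq, Complex.ofReal_im, abs_zero, Complex.ofReal_re]; positivity
  have hloc : TendstoLocallyUniformlyOn (fun n z => E n z x) S atTop U := by
    refine tendstoLocallyUniformlyOn_of_forall_exists_nhds fun z hz =>
      ⟨U ∩ Metric.ball 0 (‖z‖ + 1), ?_, (hunif (‖z‖ + 1)).mono (inter_subset_inter_left _ hUC)⟩
    exact inter_mem self_mem_nhdsWithin (mem_nhdsWithin_of_mem_nhds
      (Metric.isOpen_ball.mem_nhds (by rw [mem_ball_zero_iff]; linarith)))
  have hEdiff : ∀ᶠ n in atTop, DifferentiableOn ℂ (fun z => E n z x) U :=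
    Eventually.of_forall fun n z _ => (hEd n x z).differentiableAt.differentiableWithinAt
  have hSd := hloc.differentiableOn hEdiff hUo
  have hderiv := hloc.deriv hEdiff hUo
  have hderiv' : ∀ t : ℝ, 0 < t → Tendsto (fun n => -B n (E n t x)) atTop (𝓝 (deriv S t)) := by
    intro t ht
    have := hderiv.tendsto_at (hUreal t ht)
    refine this.congr fun n => ?_
    exact (hEd n x t).deriv
  refine ⟨fun t => S t, fun t => deriv S t, ?_, ?_, ?_, ?_, ?_⟩
  · intro t ht
    have h1 : ContinuousOn S (C ∩ Metric.ball 0 (|t| + 1)) :=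
      (hunif _).continuousOn (Eventually.of_forall fun n z _ =>
        (hEd n x z).continuousAt.continuousWithinAt).frequently
    have h2 : ContinuousOn (fun s : ℝ => S s) (Ici 0 ∩ Metric.ball 0 (|t| + 1)) := by
      refine h1.comp Complex.continuous_ofReal.continuousOn fun s hs => ⟨hCreal s hs.1, ?_⟩
      have := hs.2
      rw [mem_ball_zero_iff] at this ⊢
      rwa [Complex.norm_real]
    have h3 := h2 t ⟨ht, by rw [mem_ball_zero_iff, Real.norm_eq_abs]; linarith⟩
    refine h3.mono_of_mem_nhdsWithin (inter_mem self_mem_nhdsWithin (mem_nhdsWithin_of_mem_nhds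
      (Metric.isOpen_ball.mem_nhds (by rw [mem_ball_zero_iff, Real.norm_eq_abs]; linarith))))
  · have h1 := hS (0 : ℝ) (hCreal 0 le_rfl)
    refine tendsto_nhds_unique h1 ?_
    simp [E]
  · intro t ht
    have h1 := hderiv' t ht
    have h2 := (P.continuous.tendsto _).comp h1
    have h3 := hS t (hCreal t ht.le)
    have h4 : Tendsto (fun n => -E n t x - (ε n : ℂ) • (-B n (E n t x))) atTop
        (𝓝 (-S t - (0 : ℂ) • deriv S t)) := by
      refine h3.neg.sub (Tendsto.smul ?_ h1)
      exact (Complex.continuous_ofReal.tendsto 0).comp hε0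
    refine tendsto_nhds_unique h2 ?_
    simp only [zero_smul, sub_zero] at h4
    refine h4.congr fun n => ?_
    have := congrArg (fun T : H →L[ℂ] H => T (E n t x)) (hPB n)
    simp only [mul_apply_eq_comp, sub_apply, one_apply_eq_self, smul_apply] at this
    simp only [Function.comp_apply, map_neg, this, smul_neg]
    abel
  · intro t ht
    have h1 := (hSd.differentiableAt (hUo.mem_nhds (hUreal t ht))).hasDerivAt
    have h2 : HasDerivAt (fun t : ℝ => S t) _ t := h1.scomp t Complex.ofRealCLM.hasDerivAt
    simpa using h2
  · intro t ht
    have h1 : ‖S t‖ ≤ ‖x‖ := le_of_tendsto (hS t (hCreal t ht.le)).norm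
      (Eventually.of_forall fun n => hE1 n t (hCreal t ht.le) x)
    have h2 : ‖deriv S t‖ ≤ ‖x‖ / (m / (1 + m) * t) := by
      refine le_of_tendsto (hderiv' t ht).norm (Eventually.of_forall fun n => ?_)
      rw [← (hEd n x t).deriv]
      refine Complex.norm_deriv_le_of_forall_mem_sphere_norm_le (by positivity) ?_ fun z hz => ?_
      · exact (show Differentiable ℂ (fun z => E n z x) from
          fun z => (hEd n x z).differentiableAt).diffContOnCl
      · refine hE1 n z ?_ x
        -- the circle of radius `m t / (1 + m)` about `t` stays inside the sector
        have hr : |z.re - t| ≤ m / (1 + m) * t := by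
          have := Complex.abs_re_le_norm (z - t)
          rw [mem_sphere_iff_norm.1 hz] at this
          simpa using this
        have hi : |z.im| ≤ m / (1 + m) * t := by
          have := Complex.abs_im_le_norm (z - t)
          rw [mem_sphere_iff_norm.1 hz] at this
          simpa using this
        have h3 : t / (1 + m) ≤ z.re := by
          have h5 : t / (1 + m) = t - m / (1 + m) * t := by field_simp; ring
          rw [h5]
          linarith [(abs_le.1 hr).1]
        calc |z.im| ≤ m / (1 + m) * t := hi
          _ = m * (t / (1 + m)) := by ring
          _ ≤ m * z.re := by gcongr
    have h3 : t * (‖x‖ / (m / (1 + m) * t)) = (1 + m) / m * ‖x‖ := by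
      field_simp
    have h4 := mul_le_mul_of_nonneg_left h2 ht.le
    rw [h3] at h4
    linarith

end Abstract

/-! ### The inverse operator -/

/-- Lebesgue measure on `(0,1]`, the base measure of `L²(0,1)`. -/
noncomputable abbrev unitMeas : Measure ℝ := volume.restrict (Ioc (0:ℝ) 1)

instance : IsProbabilityMeasure unitMeas := ⟨by simp⟩

/-- The kernel `(1 - p)₊^α - (x - p)₊^α`; for `α > 0` the positive parts make it continuous on all
of `ℝ²`. -/
noncomputable def kern (α x p : ℝ) : ℝ := (max (1 - p) 0) ^ α - (max (x - p) 0) ^ α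

/-- The function `P w`, with kernel `kern α / Γ(α + 1)`. For `w ∈ L²(0,1)` it is the solution `u` of
`A u = -w`. -/
noncomputable def pot (α : ℝ) (w : ℝ → ℂ) (x : ℝ) : ℂ :=
  ((Real.Gamma (α + 1))⁻¹ : ℝ) • ∫ p, (kern α x p : ℂ) * w p ∂unitMeas

theorem continuous_kern {α : ℝ} (hα : 0 < α) : Continuous fun q : ℝ × ℝ => kern α q.1 q.2 := by
  unfold kern
  refine Continuous.sub ?_ ?_ <;>
  exact Continuous.rpow_const (by fun_prop) fun _ => Or.inr hα.le

theorem norm_kern_le {α x p : ℝ} (hα : 0 < α) (hx : x ≤ 1) (hp : 0 ≤ p) :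
    ‖(kern α x p : ℂ)‖ ≤ 1 := by
  rw [Complex.norm_real, Real.norm_eq_abs, abs_le]
  have h1 : (max (1 - p) 0) ^ α ≤ 1 :=
    Real.rpow_le_one (le_max_right _ _) (by simp [hp]) hα.le
  have h2 : (max (x - p) 0) ^ α ≤ (max (1 - p) 0) ^ α :=
    Real.rpow_le_rpow (le_max_right _ _) (max_le_max (by linarith) le_rfl) hα.le
  have h3 : 0 ≤ (max (x - p) 0) ^ α := Real.rpow_nonneg (le_max_right _ _) _
  unfold kern
  constructor <;> linarith

theorem ae_mem_unit : ∀ᵐ x ∂unitMeas, x ∈ Ioc (0:ℝ) 1 :=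
  ae_restrict_mem measurableSet_Ioc

theorem integrable_kern_mul {α x : ℝ} (hα : 0 < α) (hx : x ≤ 1) {w : ℝ → ℂ}
    (hw : Integrable w unitMeas) : Integrable (fun p => (kern α x p : ℂ) * w p) unitMeas := by
  refine hw.bdd_mul (c := 1) ?_ ?_
  · have := (continuous_kern hα).comp (Continuous.prodMk_right x)
    exact (Complex.continuous_ofReal.comp this).aestronglyMeasurable
  · filter_upwards [ae_mem_unit] with p hp
    exact norm_kern_le hα hx hp.1.le

theorem norm_pot_le {α x : ℝ} (hα : 0 < α) (hx : x ≤ 1) {w : ℝ → ℂ}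
    (hw : Integrable w unitMeas) :
    ‖pot α w x‖ ≤ (Real.Gamma (α + 1))⁻¹ * ∫ p, ‖w p‖ ∂unitMeas := by
  have hΓ : 0 < Real.Gamma (α + 1) := Real.Gamma_pos_of_pos (by linarith)
  unfold pot
  rw [norm_smul, Real.norm_of_nonneg (inv_nonneg.2 hΓ.le)]
  gcongr
  refine norm_integral_le_of_norm_le hw.norm ?_
  filter_upwards [ae_mem_unit] with p hp
  rw [norm_mul]
  exact mul_le_of_le_one_left (norm_nonneg _) (norm_kern_le hα hx hp.1.le)

theorem aestronglyMeasurable_pot {α : ℝ} (hα : 0 < α) {w : ℝ → ℂ}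
    (hw : Integrable w unitMeas) : AEStronglyMeasurable (pot α w) unitMeas := by
  refine AEStronglyMeasurable.const_smul (f := fun x => ∫ p, (kern α x p : ℂ) * w p ∂unitMeas) ?_
    ((Real.Gamma (α + 1))⁻¹ : ℝ)
  refine AEStronglyMeasurable.integral_prod_right' (μ := unitMeas) (ν := unitMeas)
    (f := fun q : ℝ × ℝ => (kern α q.1 q.2 : ℂ) * w q.2) ?_
  refine AEStronglyMeasurable.mul ?_ hw.1.comp_snd
  exact (Complex.continuous_ofReal.comp (continuous_kern hα)).aestronglyMeasurable

theorem memLp_pot {α : ℝ} (hα : 0 < α) {w : ℝ → ℂ} (hw : Integrable w unitMeas) :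
    MemLp (pot α w) 2 unitMeas := by
  refine MemLp.of_bound (aestronglyMeasurable_pot hα hw)
    ((Real.Gamma (α + 1))⁻¹ * ∫ p, ‖w p‖ ∂unitMeas) ?_
  filter_upwards [ae_mem_unit] with x hx
  exact norm_pot_le hα hx.2 hw

theorem integrable_of_Lp (w : Lp ℂ 2 unitMeas) : Integrable w unitMeas :=
  (Lp.memLp w).integrable (by norm_num)

theorem integral_norm_le_Lp (w : Lp ℂ 2 unitMeas) : ∫ p, ‖w p‖ ∂unitMeas ≤ ‖w‖ := by
  rw [Lp.norm_def, integral_norm_eq_lintegral_enorm (Lp.aestronglyMeasurable w),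
    ← eLpNorm_one_eq_lintegral_enorm]
  exact ENNReal.toReal_mono (Lp.eLpNorm_ne_top w)
    (eLpNorm_le_eLpNorm_of_exponent_le (by norm_num) (Lp.aestronglyMeasurable w))

theorem pot_congr {α : ℝ} {v w : ℝ → ℂ} (h : v =ᵐ[unitMeas] w) : pot α v = pot α w := by
  ext x
  unfold pot
  congr 1
  refine integral_congr_ae ?_
  filter_upwards [h] with p hp
  rw [hp]

theorem pot_add {α x : ℝ} (hα : 0 < α) (hx : x ≤ 1) {v w : ℝ → ℂ}
    (hv : Integrable v unitMeas) (hw : Integrable w unitMeas) :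
    pot α (v + w) x = pot α v x + pot α w x := by
  unfold pot
  rw [← smul_add, ← integral_add (integrable_kern_mul hα hx hv) (integrable_kern_mul hα hx hw)]
  simp only [Pi.add_apply, mul_add]

theorem pot_smul (α x : ℝ) (c : ℂ) (w : ℝ → ℂ) : pot α (c • w) x = c * pot α w x := by
  unfold pot
  simp only [Pi.smul_apply, smul_eq_mul, mul_left_comm _ c, Complex.real_smul]
  rw [integral_const_mul]
  ring

/-- The operator `w ↦ pot α w` on `L²(0,1)`, that is, `-A⁻¹`. -/
noncomputable def potCLM (α : ℝ) (hα : 0 < α) : Lp ℂ 2 unitMeas →L[ℂ] Lp ℂ 2 unitMeas :=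
  LinearMap.mkContinuous
    { toFun := fun w => (memLp_pot hα (integrable_of_Lp w)).toLp
      map_add' := fun v w => by
        rw [← MemLp.toLp_add, MemLp.toLp_eq_toLp_iff]
        filter_upwards [ae_mem_unit] with x hx
        rw [pot_congr (Lp.coeFn_add v w), pot_add hα hx.2 (integrable_of_Lp v) (integrable_of_Lp w)]
        rfl
      map_smul' := fun c w => by
        rw [RingHom.id_apply, ← MemLp.toLp_const_smul, MemLp.toLp_eq_toLp_iff]
        refine Eventually.of_forall fun x => ?_
        rw [pot_congr (Lp.coeFn_smul c w), pot_smul]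
        rfl }
    (Real.Gamma (α + 1))⁻¹ fun w => by
      have hΓ : 0 < Real.Gamma (α + 1) := Real.Gamma_pos_of_pos (by linarith)
      have h := Lp.norm_le_of_ae_bound (f := (memLp_pot hα (integrable_of_Lp w)).toLp)
        (C := (Real.Gamma (α + 1))⁻¹ * ‖w‖) (by positivity) (by
          filter_upwards [ae_mem_unit, MemLp.coeFn_toLp (memLp_pot hα (integrable_of_Lp w))]
            with x hx h
          rw [h]
          refine (norm_pot_le hα hx.2 (integrable_of_Lp w)).trans ?_
          gcongr
          exact integral_norm_le_Lp w)
      have h1 : measureUnivNNReal unitMeas = 1 := by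
        rw [← ENNReal.coe_inj, coe_measureUnivNNReal]; simp
      rw [h1] at h
      simpa using h

theorem potCLM_ae {α : ℝ} (hα : 0 < α) (w : Lp ℂ 2 unitMeas) :
    potCLM α hα w =ᵐ[unitMeas] pot α w :=
  MemLp.coeFn_toLp (memLp_pot hα (integrable_of_Lp w))

/-! ### Primitives of fractional integrals -/

/-- The kernel `τ^(α-1)` of the fractional integral, cut off outside `(0,1]` so that it is integrable
on `ℝ`. -/
noncomputable def singKer (α : ℝ) : ℝ → ℂ :=
  (Ioc (0:ℝ) 1).indicator fun τ => ((τ ^ (α - 1) : ℝ) : ℂ)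

theorem integrable_singKer {α : ℝ} (hα : 0 < α) : Integrable (singKer α) := by
  unfold singKer
  rw [integrable_indicator_iff measurableSet_Ioc]
  have h : IntervalIntegrable (fun τ : ℝ => τ ^ (α - 1)) volume 0 1 :=
    intervalIntegral.intervalIntegrable_rpow' (by linarith)
  rw [intervalIntegrable_iff_integrableOn_Ioc_of_le zero_le_one] at h
  exact h.ofReal

theorem integral_singKer {α x p : ℝ} (hα : 0 < α) (hx : x ∈ Icc (0:ℝ) 1) (hp : 0 < p) :
    ∫ t in (0:ℝ)..x, singKer α (t - p) = (((max (x - p) 0) ^ α / α : ℝ) : ℂ) := by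
  have hx0 := hx.1
  have hx1 := hx.2
  rw [intervalIntegral.integral_comp_sub_right (f := singKer α), intervalIntegral.integral_of_le (by linarith)]
  unfold singKer
  rw [setIntegral_indicator measurableSet_Ioc]
  have : Ioc (0 - p) (x - p) ∩ Ioc 0 1 = Ioc 0 (max (x - p) 0) := by
    ext τ
    simp only [mem_inter_iff, mem_Ioc, le_max_iff]
    constructor
    · rintro ⟨⟨-, h1⟩, h2, -⟩
      exact ⟨h2, Or.inl h1⟩
    · rintro ⟨h1, h2 | h2⟩ <;> refine ⟨⟨?_, ?_⟩, ?_, ?_⟩ <;> linarith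
  rw [this, ← intervalIntegral.integral_of_le (le_max_right _ _), intervalIntegral.integral_ofReal,
    integral_rpow (Or.inl (by linarith))]
  simp [Real.zero_rpow hα.ne']

/-- On `[0,1]` the fractional integral is a convolution on `ℝ`. -/
theorem fracInt_eq {α t : ℝ} (hα : α ∈ Ioo (0:ℝ) 1) (ht : t ∈ Icc (0:ℝ) 1) (w : ℝ → ℂ) :
    fracInt α w t = ((Real.Gamma α)⁻¹ : ℝ) •
      ∫ p, (Ioc (0:ℝ) 1).indicator w p * singKer α (t - p) := by
  unfold fracInt
  rw [if_neg hα.1.ne', intervalIntegral.integral_of_le ht.1, ← integral_indicator measurableSet_Ioc]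
  congr 2
  ext p
  unfold singKer
  have ht1 := ht.2
  by_cases h1 : 0 < p
  · rcases lt_trichotomy p t with h | h | h
    · rw [indicator_of_mem (show p ∈ Ioc 0 t from ⟨h1, h.le⟩),
        indicator_of_mem (show p ∈ Ioc (0:ℝ) 1 from ⟨h1, by linarith⟩),
        indicator_of_mem (show t - p ∈ Ioc (0:ℝ) 1 from ⟨by linarith, by linarith⟩), mul_comm]
    -- at `p = t` both kernels vanish, as `0 ^ (α - 1) = 0` by convention
    · subst h
      rw [indicator_of_mem (show p ∈ Ioc 0 p from ⟨h1, le_rfl⟩), sub_self, Real.zero_rpow (by linarith [hα.2])]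
      simp
    · rw [indicator_of_notMem (a := p) (fun h' => by linarith [h'.2]),
        indicator_of_notMem (a := t - p) (fun h' => by linarith [h'.1]), mul_zero]
  · rw [indicator_of_notMem (a := p) (fun h' => h1 h'.1), indicator_of_notMem (a := p) (fun h' => h1 h'.1),
      zero_mul]

theorem integrable_conv {α : ℝ} (hα : 0 < α) {w : ℝ → ℂ} (hw : Integrable w unitMeas) :
    Integrable (fun q : ℝ × ℝ => (Ioc (0:ℝ) 1).indicator w q.2 * singKer α (q.1 - q.2))
      ((volume : Measure ℝ).prod volume) :=
  Integrable.convolution_integrand (ContinuousLinearMap.mul ℂ ℂ) (μ := volume) (ν := volume)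
    ((integrable_indicator_iff measurableSet_Ioc).2 hw) (integrable_singKer hα)

theorem intervalIntegrable_fracInt {α : ℝ} (hα : α ∈ Ioo (0:ℝ) 1) {w : ℝ → ℂ}
    (hw : Integrable w unitMeas) : IntervalIntegrable (fracInt α w) volume 0 1 := by
  rw [intervalIntegrable_iff_integrableOn_Ioc_of_le zero_le_one]
  have h := ((integrable_conv hα.1 hw).integral_prod_left.smul
    ((Real.Gamma α)⁻¹ : ℝ)).integrableOn (s := Ioc (0:ℝ) 1)
  refine h.congr ?_
  filter_upwards [ae_mem_unit] with t ht
  rw [fracInt_eq hα ⟨ht.1.le, ht.2⟩]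
  rfl

/-- The semigroup identity `∫₀ˣ I^α w = I^(α+1) w`, by Fubini. -/
theorem integral_fracInt {α x : ℝ} (hα : α ∈ Ioo (0:ℝ) 1) (hx : x ∈ Icc (0:ℝ) 1) {w : ℝ → ℂ}
    (hw : Integrable w unitMeas) :
    ∫ t in (0:ℝ)..x, fracInt α w t = ((Real.Gamma (α + 1))⁻¹ : ℝ) •
      ∫ p, (((max (x - p) 0) ^ α : ℝ) : ℂ) * w p ∂unitMeas := by
  have h1 : ∫ t in (0:ℝ)..x, fracInt α w t = ∫ t in (0:ℝ)..x, ((Real.Gamma α)⁻¹ : ℝ) •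
      ∫ p, (Ioc (0:ℝ) 1).indicator w p * singKer α (t - p) := by
    refine intervalIntegral.integral_congr fun t ht => ?_
    rw [uIcc_of_le hx.1] at ht
    exact fracInt_eq hα ⟨ht.1, ht.2.trans hx.2⟩ w
  rw [h1, intervalIntegral.integral_smul, intervalIntegral_integral_swap]
  · rw [Real.Gamma_add_one hα.1.ne', ← integral_indicator measurableSet_Ioc, mul_inv,
      mul_comm α⁻¹, mul_smul]
    congr 1
    rw [← integral_smul]
    refine integral_congr_ae (Eventually.of_forall fun p => ?_)
    simp only [intervalIntegral.integral_const_mul]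
    by_cases hp : p ∈ Ioc (0:ℝ) 1
    · rw [indicator_of_mem hp, indicator_of_mem hp, integral_singKer hα.1 hx hp.1,
        Complex.real_smul]
      push_cast
      ring
    · rw [indicator_of_notMem hp, indicator_of_notMem hp]
      simp
  · refine (integrable_conv hα.1 hw).mono_measure ?_
    exact Measure.prod_mono Measure.restrict_le_self le_rfl

/-- `-P w` satisfies `A (-P w) = w`, together with the boundary conditions. -/
theorem inGraphA_pot {α : ℝ} (hα : α ∈ Ioo (0:ℝ) 1) {w : ℝ → ℂ} (hw : MemLp w 2 unitMeas) :
    InGraphA α (fun x => -pot α w x) w := by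
  have hwi : Integrable w unitMeas := hw.integrable (by norm_num)
  refine ⟨?_, ⟨hw.1, ?_⟩, intervalIntegrable_fracInt hα hwi, fun x hx => ?_⟩
  · simp [pot, kern]
  · exact hw.integrable_norm_pow (by norm_num)
  · have h : pot α w 0 - pot α w x = ((Real.Gamma (α + 1))⁻¹ : ℝ) •
        ∫ p, (((max (x - p) 0) ^ α : ℝ) : ℂ) * w p ∂unitMeas := by
      unfold pot
      rw [← smul_sub, ← integral_sub (integrable_kern_mul hα.1 zero_le_one hwi)
        (integrable_kern_mul hα.1 hx.2 hwi)]
      refine congrArg _ (integral_congr_ae ?_)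
      filter_upwards [ae_mem_unit] with p hp
      have : max (0 - p) 0 = 0 := max_eq_right (by linarith [hp.1])
      simp only [kern, this, Real.zero_rpow hα.1.ne']
      push_cast
      ring
    rw [integral_fracInt hα hx hwi, ← h]
    ring

/-! ### Powers as Laplace-type integrals -/

/-- The weight `s^(-α-1)` integrates functions that are bounded and `O(s)` at the origin. -/
theorem integrableOn_levy {α : ℝ} (hα : α ∈ Ioo (0:ℝ) 1) :
    IntegrableOn (fun s : ℝ => s ^ (-α - 1) * min 1 s) (Ioi 0) := by
  rw [← Ioc_union_Ioi_eq_Ioi zero_le_one]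
  refine IntegrableOn.union ?_ ?_
  · have h : IntervalIntegrable (fun s : ℝ => s ^ (-α)) volume 0 1 :=
      intervalIntegral.intervalIntegrable_rpow' (by linarith [hα.2])
    rw [intervalIntegrable_iff_integrableOn_Ioc_of_le zero_le_one] at h
    refine h.congr_fun (fun s hs => ?_) measurableSet_Ioc
    simp only [min_eq_right hs.2]
    rw [← Real.rpow_add_one hs.1.ne']
    ring_nf
  · refine (integrableOn_Ioi_rpow_of_lt (by linarith [hα.1] : -α - 1 < -1) one_pos).congr_fun
      (fun s hs => ?_) measurableSet_Ioi
    simp [min_eq_left (le_of_lt (mem_Ioi.1 hs))]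

theorem norm_one_sub_exp_le {z : ℂ} (hz : 0 ≤ z.re) : ‖1 - Complex.exp (-z)‖ ≤ 2 * min 1 ‖z‖ := by
  rw [norm_sub_rev]
  rcases le_total ‖z‖ 1 with h | h
  · rw [min_eq_right h]
    have := Complex.norm_exp_sub_one_le (x := -z) (by rwa [norm_neg])
    rwa [norm_neg] at this
  · rw [min_eq_left h]
    refine (norm_sub_le _ _).trans ?_
    have : ‖Complex.exp (-z)‖ ≤ 1 := by
      rw [Complex.norm_exp, Complex.neg_re]
      exact Real.exp_le_one_iff.2 (by linarith)
    rw [norm_one]; linarith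

/-- The integral `∫₀^∞ s^(-α-1) (1 - exp (-ν s b)) ds`, which is absolutely convergent for
`0 < α < 1` and `Re ν ≥ 0`, `b ≥ 0`. -/
noncomputable def lapInt (α : ℝ) (ν : ℂ) (b : ℝ) : ℂ :=
  ∫ s in Ioi (0:ℝ), ((s ^ (-α - 1) : ℝ) : ℂ) * (1 - Complex.exp (-(ν * s * b)))

theorem norm_lap_le {α : ℝ} {ν : ℂ} (hν : 0 ≤ ν.re) {s b : ℝ} (hs : 0 < s) (hb : b ∈ Icc (0:ℝ) 1) :
    ‖((s ^ (-α - 1) : ℝ) : ℂ) * (1 - Complex.exp (-(ν * s * b)))‖ ≤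
      2 * (1 + ‖ν‖) * (s ^ (-α - 1) * min 1 s) := by
  have hb0 := hb.1
  have hb1 := hb.2
  have hsα : 0 ≤ s ^ (-α - 1) := Real.rpow_nonneg hs.le _
  rw [norm_mul, Complex.norm_real, Real.norm_of_nonneg hsα]
  have h1 : 0 ≤ (ν * s * b).re := by
    rw [Complex.re_mul_ofReal, Complex.re_mul_ofReal]; positivity
  have h2 : ‖ν * s * b‖ ≤ ‖ν‖ * s := by
    rw [norm_mul, norm_mul, Complex.norm_real, Complex.norm_real, Real.norm_of_nonneg hs.le,
      Real.norm_of_nonneg hb0]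
    exact mul_le_of_le_one_right (by positivity) hb1
  have h3 : min 1 ‖ν * s * b‖ ≤ (1 + ‖ν‖) * min 1 s := by
    rw [mul_min_of_nonneg _ _ (by positivity)]
    refine min_le_min (by linarith [norm_nonneg ν]) (h2.trans ?_)
    nlinarith
  calc _ ≤ s ^ (-α - 1) * (2 * min 1 ‖ν * s * b‖) := by
        gcongr; exact norm_one_sub_exp_le h1
    _ ≤ s ^ (-α - 1) * (2 * ((1 + ‖ν‖) * min 1 s)) := by gcongr
    _ = _ := by ring

theorem integrableOn_lap {α : ℝ} (hα : α ∈ Ioo (0:ℝ) 1) {ν : ℂ} (hν : 0 ≤ ν.re) {b : ℝ}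
    (hb : b ∈ Icc (0:ℝ) 1) :
    IntegrableOn (fun s : ℝ => ((s ^ (-α - 1) : ℝ) : ℂ) * (1 - Complex.exp (-(ν * s * b))))
      (Ioi 0) := by
  refine Integrable.mono' ((integrableOn_levy hα).const_mul (2 * (1 + ‖ν‖))) ?_ ?_
  · refine Measurable.aestronglyMeasurable ?_
    fun_prop
  · filter_upwards [ae_restrict_mem measurableSet_Ioi] with s hs
    exact norm_lap_le hν hs hb

/-- Substituting `s ↦ b s` shows that `lapInt α ν` is a multiple of `b^α`. -/
theorem lapInt_scale {α : ℝ} (hα : 0 < α) (ν : ℂ) {b : ℝ} (hb : 0 ≤ b) :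
    lapInt α ν b = ((b ^ α : ℝ) : ℂ) * lapInt α ν 1 := by
  rcases hb.eq_or_lt with rfl | hb
  · simp [lapInt, Real.zero_rpow hα.ne']
  · have h := integral_comp_mul_left_Ioi
      (fun s : ℝ => ((s ^ (-α - 1) : ℝ) : ℂ) * (1 - Complex.exp (-(ν * s * (1:ℝ))))) 0 hb
    rw [mul_zero] at h
    have h2 : ∫ s in Ioi (0:ℝ), (((b * s) ^ (-α - 1) : ℝ) : ℂ) *
        (1 - Complex.exp (-(ν * (b * s : ℝ) * (1:ℝ)))) =
        ((b ^ (-α - 1) : ℝ) : ℂ) * lapInt α ν b := by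
      rw [lapInt, ← integral_const_mul]
      refine setIntegral_congr_fun measurableSet_Ioi fun s hs => ?_
      simp only [Real.mul_rpow hb.le (le_of_lt (mem_Ioi.1 hs))]
      push_cast
      rw [mul_one, mul_assoc, mul_comm (b:ℂ), mul_assoc ν]
    rw [h2] at h
    have h3 : ((b ^ (α + 1) : ℝ) : ℂ) * ((b ^ (-α - 1) : ℝ) : ℂ) = 1 := by
      rw [← Complex.ofReal_mul, ← Real.rpow_add hb]; simp
    have h4 : ((b ^ (α + 1) : ℝ) : ℂ) * ((b⁻¹ : ℝ) : ℂ) = ((b ^ α : ℝ) : ℂ) := by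
      rw [← Complex.ofReal_mul, Real.rpow_add_one hb.ne', mul_assoc, mul_inv_cancel₀ hb.ne', mul_one]
    have h5 : lapInt α ν b = ((b ^ (α + 1) : ℝ) : ℂ) * (((b ^ (-α - 1) : ℝ) : ℂ) * lapInt α ν b) := by
      rw [← mul_assoc, h3, one_mul]
    rw [h5, h, Complex.real_smul, ← mul_assoc, h4, lapInt]

/-- The kernel of `P` as a superposition of differences of exponentials. -/
theorem lapInt_mul_kern {α : ℝ} (hα : α ∈ Ioo (0:ℝ) 1) {ν : ℂ} (hν : 0 ≤ ν.re) {x p : ℝ}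
    (hx : x ∈ Ioc (0:ℝ) 1) (hp : p ∈ Ioc (0:ℝ) 1) :
    lapInt α ν 1 * kern α x p = ∫ s in Ioi (0:ℝ), ((s ^ (-α - 1) : ℝ) : ℂ) *
      (Complex.exp (-(ν * s * (max (x - p) 0 : ℝ))) -
        Complex.exp (-(ν * s * (max (1 - p) 0 : ℝ)))) := by
  have h1 : max (1 - p) 0 ∈ Icc (0:ℝ) 1 :=
    ⟨le_max_right _ _, max_le (by linarith [hp.1]) zero_le_one⟩
  have h2 : max (x - p) 0 ∈ Icc (0:ℝ) 1 :=
    ⟨le_max_right _ _, max_le (by linarith [hp.1, hx.2]) zero_le_one⟩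
  have h := lapInt_scale hα.1 ν h1.1
  have h' := lapInt_scale hα.1 ν h2.1
  unfold kern
  rw [Complex.ofReal_sub, mul_sub, mul_comm, ← h, mul_comm, ← h', lapInt, lapInt,
    ← integral_sub (integrableOn_lap hα hν h1) (integrableOn_lap hα hν h2)]
  congr 1
  ext s
  ring

theorem sub_sq_half_le_sin {s : ℝ} (hs : 0 ≤ s) : s - s ^ 2 / 2 ≤ Real.sin s := by
  have h : MonotoneOn (fun s : ℝ => Real.sin s - (s - s ^ 2 / 2)) (Ici 0) := by
    refine monotoneOn_of_hasDerivWithinAt_nonneg (f' := fun s => Real.cos s - (1 - s))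
      (convex_Ici 0) (by fun_prop) (fun x _ => ?_) (fun x hx => ?_)
    · have h1 : HasDerivAt (fun s : ℝ => s ^ 2 / 2) x x := by
        simpa using (hasDerivAt_pow 2 x).div_const 2
      exact ((Real.hasDerivAt_sin x).sub ((hasDerivAt_id' x).sub h1)).hasDerivWithinAt
    · rw [interior_Ici, mem_Ioi] at hx
      have := Real.one_sub_sq_div_two_le_cos (x := x)
      have := Real.neg_one_le_cos x
      rcases le_total x 2 with h | h <;> nlinarith
  have := h (mem_Ici.2 le_rfl) hs hs
  simp at this
  linarith

/-- The real part is at least `Γ(1 - α)`, because `1 - exp (-s) cos s ≥ s exp (-s)`. -/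
theorem lapInt_re_pos {α : ℝ} (hα : α ∈ Ioo (0:ℝ) 1) : 0 < (lapInt α (1 + Complex.I) 1).re := by
  have hI : (0:ℝ) ≤ (1 + Complex.I).re := by simp
  have hint := integrableOn_lap hα hI (b := 1) ⟨zero_le_one, le_rfl⟩
  have hG := Real.GammaIntegral_convergent (s := 1 - α) (by linarith [hα.2])
  have h1 : Real.Gamma (1 - α) ≤ (lapInt α (1 + Complex.I) 1).re := by
    rw [lapInt, Real.Gamma_eq_integral (by linarith [hα.2])]
    refine le_trans ?_ (integral_re hint).le
    refine setIntegral_mono_on hG hint.re measurableSet_Ioi fun s hs => ?_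
    have hs : 0 < s := hs
    have hre : (((s ^ (-α - 1) : ℝ) : ℂ) * (1 - Complex.exp (-((1 + Complex.I) * s * (1:ℝ))))).re =
        s ^ (-α - 1) * (1 - Real.exp (-s) * Real.cos s) := by
      rw [Complex.re_ofReal_mul, Complex.sub_re, Complex.exp_re]
      simp
    change _ ≤ (((s ^ (-α - 1) : ℝ) : ℂ) * (1 - Complex.exp (-((1 + Complex.I) * s * (1:ℝ))))).re
    rw [hre, show 1 - α - 1 = -α - 1 + 1 by ring, Real.rpow_add_one hs.ne']
    have h2 : Real.exp (-s) * (1 + s) ≤ 1 := by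
      have := Real.add_one_le_exp s
      rw [Real.exp_neg, inv_mul_le_iff₀ (Real.exp_pos s)]; linarith
    have h3 : 0 ≤ s ^ (-α - 1) := Real.rpow_nonneg hs.le _
    have h4 := Real.cos_le_one s
    have h5 := Real.exp_pos (-s)
    have h6 : Real.exp (-s) * s ≤ 1 - Real.exp (-s) * Real.cos s := by nlinarith
    nlinarith
  exact (Real.Gamma_pos_of_pos (by linarith [hα.2])).trans_le h1

/-- The imaginary part is `∫₀^∞ s^(-α-1) exp (-s) sin s ds`. Since `sin s ≥ s - s²/2`, it is at least
`Γ(1 - α) (1 - (1 - α)/2) > 0`. -/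
theorem lapInt_im_pos {α : ℝ} (hα : α ∈ Ioo (0:ℝ) 1) : 0 < (lapInt α (1 + Complex.I) 1).im := by
  have hI : (0:ℝ) ≤ (1 + Complex.I).re := by simp
  have hint := integrableOn_lap hα hI (b := 1) ⟨zero_le_one, le_rfl⟩
  have hG := Real.GammaIntegral_convergent (s := 1 - α) (by linarith [hα.2])
  have hG' := Real.GammaIntegral_convergent (s := 1 - α + 1) (by linarith [hα.2])
  have h1 : Real.Gamma (1 - α) - Real.Gamma (1 - α + 1) / 2 ≤ (lapInt α (1 + Complex.I) 1).im := by
    rw [lapInt, Real.Gamma_eq_integral (by linarith [hα.2]),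
      Real.Gamma_eq_integral (by linarith [hα.2]), ← integral_div,
      ← integral_sub hG (hG'.div_const 2)]
    refine le_trans ?_ (integral_im hint).le
    refine setIntegral_mono_on (hG.sub (hG'.div_const 2)) hint.im measurableSet_Ioi fun s hs => ?_
    have hs : 0 < s := hs
    have him : (((s ^ (-α - 1) : ℝ) : ℂ) * (1 - Complex.exp (-((1 + Complex.I) * s * (1:ℝ))))).im =
        s ^ (-α - 1) * (Real.exp (-s) * Real.sin s) := by
      rw [Complex.im_ofReal_mul, Complex.sub_im, Complex.exp_im]
      simp
    change _ ≤ (((s ^ (-α - 1) : ℝ) : ℂ) * (1 - Complex.exp (-((1 + Complex.I) * s * (1:ℝ))))).im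
    rw [him, show 1 - α + 1 - 1 = -α - 1 + 1 + 1 by ring, show 1 - α - 1 = -α - 1 + 1 by ring,
      Real.rpow_add_one hs.ne' (-α - 1 + 1), Real.rpow_add_one hs.ne' (-α - 1)]
    have h3 : 0 ≤ s ^ (-α - 1) := Real.rpow_nonneg hs.le _
    have h4 := mul_le_mul_of_nonneg_left (sub_sq_half_le_sin hs.le)
      (mul_nonneg h3 (Real.exp_pos (-s)).le)
    linarith
  refine lt_of_lt_of_le ?_ h1
  have hp := Real.Gamma_pos_of_pos (s := 1 - α) (by linarith [hα.2])
  rw [Real.Gamma_add_one (by linarith [hα.2])]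
  nlinarith [hα.1, hα.2]

theorem lapInt_conj (α : ℝ) (ν : ℂ) (b : ℝ) :
    lapInt α ((starRingEnd ℂ) ν) b = (starRingEnd ℂ) (lapInt α ν b) := by
  rw [lapInt, lapInt, ← integral_conj]
  congr 1
  ext s
  simp [← Complex.exp_conj]

/-! ### The sector inequality -/

open scoped ComplexConjugate

/-- Integrability is not needed: the integral of a nonintegrable function is `0`. -/
theorem re_integral_nonneg {X : Type*} [MeasurableSpace X] {ρ : Measure X} {f : X → ℂ}
    (h : ∀ᵐ x ∂ρ, 0 ≤ (f x).re) : 0 ≤ (∫ x, f x ∂ρ).re := by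
  by_cases hf : Integrable f ρ
  · have := integral_re hf
    simp only [RCLike.re_eq_complex_re] at this
    rw [← this]
    exact integral_nonneg_of_ae h
  · rw [integral_undef hf, Complex.zero_re]

/-- Energy inequality for an exponential kernel: here `g = ∫₀ w`, `h' = w - λ h`, so that
`z = g - h` satisfies `z' = λ h`. The derivative of `conj g (z(1) - z) + |z|²/2` is the integrand
minus a function of real part `Re λ |h|²`. -/
theorem re_energy_nonneg {lam : ℂ} (hlam : 0 ≤ lam.re) {w g h : ℝ → ℂ} (hw : Continuous w)
    (hg : ∀ x, HasDerivAt g (w x) x) (hh : ∀ x, HasDerivAt h (w x - lam * h x) x)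
    (hg0 : g 0 = 0) (hh0 : h 0 = 0) :
    0 ≤ (∫ x in (0:ℝ)..1, conj (w x) * ((g 1 - h 1) - (g x - h x))).re := by
  have cg : Continuous g := continuous_iff_continuousAt.2 fun x => (hg x).continuousAt
  have ch : Continuous h := continuous_iff_continuousAt.2 fun x => (hh x).continuousAt
  set a := g 1 - h 1 with ha
  -- the correction term, of real part `Re λ |h|²`
  set D : ℝ → ℂ := fun x => conj (g x) * (lam * h x) -
    (conj (lam * h x) * (g x - h x) + conj (g x - h x) * (lam * h x)) / 2 with hD
  have cD : Continuous D := by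
    simp only [hD]
    fun_prop
  have hderiv : ∀ x : ℝ, HasDerivAt (fun x => conj (g x) * (a - (g x - h x)) +
      conj (g x - h x) * (g x - h x) / 2) (conj (w x) * (a - (g x - h x)) - D x) x := by
    intro x
    have hz : HasDerivAt (fun x => g x - h x) (lam * h x) x := by
      convert! (hg x).sub (hh x) using 1
      ring
    have h1 : HasDerivAt (fun x => conj (g x)) (conj (w x)) x := (hg x).star
    have h2 : HasDerivAt (fun x => conj (g x - h x)) (conj (lam * h x)) x := hz.star
    convert! (h1.mul (hz.const_sub a)).add ((h2.mul hz).div_const 2) using 1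
    simp only [hD]
    ring
  have hFTC := intervalIntegral.integral_eq_sub_of_hasDerivAt (a := 0) (b := 1)
    (fun x _ => hderiv x) (Continuous.intervalIntegrable (by fun_prop) _ _)
  rw [intervalIntegral.integral_sub (Continuous.intervalIntegrable (by fun_prop) _ _)
    (cD.intervalIntegrable _ _)] at hFTC
  rw [sub_eq_iff_eq_add.1 hFTC, Complex.add_re]
  refine add_nonneg ?_ ?_
  · simp only [hg0, hh0, ← ha]
    simp only [sub_self, mul_zero, zero_add, map_zero, zero_mul, zero_div, sub_zero]
    rw [mul_comm, Complex.mul_conj]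
    norm_cast
    have := Complex.normSq_nonneg a
    positivity
  · rw [intervalIntegral.integral_of_le zero_le_one]
    refine re_integral_nonneg (Eventually.of_forall fun x => ?_)
    have : (D x).re = lam.re * Complex.normSq (h x) := by
      simp only [hD, Complex.normSq_apply]
      simp
      ring
    rw [this]
    exact mul_nonneg hlam (Complex.normSq_nonneg _)

/-- Splitting at `p = x`: the integral of `exp (-λ (x - p)₊) w(p)` is `h(x) + g(1) - g(x)` in the
notation of `re_energy_nonneg`. -/
theorem integral_exp_max {lam : ℂ} {w : ℝ → ℂ} (hw : Continuous w) {x : ℝ}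
    (hx : x ∈ Icc (0:ℝ) 1) :
    ∫ p, Complex.exp (-(lam * (max (x - p) 0 : ℝ))) * w p ∂unitMeas =
      Complex.exp (-(lam * x)) * (∫ p in (0:ℝ)..x, Complex.exp (lam * p) * w p) +
        ((∫ p in (0:ℝ)..1, w p) - ∫ p in (0:ℝ)..x, w p) := by
  have hc : Continuous fun p : ℝ => Complex.exp (-(lam * (max (x - p) 0 : ℝ))) * w p := by fun_prop
  rw [← intervalIntegral.integral_of_le zero_le_one,
    ← intervalIntegral.integral_add_adjacent_intervals (hc.intervalIntegrable 0 x)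
      (hc.intervalIntegrable x 1),
    intervalIntegral.integral_interval_sub_left (hw.intervalIntegrable _ _)
      (hw.intervalIntegrable _ _), ← intervalIntegral.integral_const_mul]
  congr 1
  · refine intervalIntegral.integral_congr fun p hp => ?_
    rw [uIcc_of_le hx.1] at hp
    simp only [max_eq_left (sub_nonneg.2 hp.2)]
    rw [← mul_assoc, ← Complex.exp_add]
    congr 2
    push_cast
    ring
  · refine intervalIntegral.integral_congr fun p hp => ?_
    rw [uIcc_of_le hx.2] at hp
    simp [max_eq_right (sub_nonpos.2 hp.1)]

/-- The quadratic form with kernel `exp (-λ (x - p)₊) - exp (-λ (1 - p)₊)` has nonnegative real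
part. -/
theorem re_exp_form_nonneg {lam : ℂ} (hlam : 0 ≤ lam.re) {w : ℝ → ℂ} (hw : Continuous w) :
    0 ≤ (∫ x, conj (w x) * ∫ p, (Complex.exp (-(lam * (max (x - p) 0 : ℝ))) -
      Complex.exp (-(lam * (max (1 - p) 0 : ℝ)))) * w p ∂unitMeas ∂unitMeas).re := by
  have hew : Continuous fun p : ℝ => Complex.exp (lam * p) * w p := by fun_prop
  have hg : ∀ x : ℝ, HasDerivAt (fun x => ∫ p in (0:ℝ)..x, w p) (w x) x := fun x =>
    hw.integral_hasStrictDerivAt 0 x |>.hasDerivAt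
  have hh : ∀ x : ℝ, HasDerivAt (fun x : ℝ => Complex.exp (-(lam * x)) *
      ∫ p in (0:ℝ)..x, Complex.exp (lam * p) * w p) (w x - lam * (Complex.exp (-(lam * x)) *
      ∫ p in (0:ℝ)..x, Complex.exp (lam * p) * w p)) x := by
    intro x
    have h1 := (hew.integral_hasStrictDerivAt 0 x).hasDerivAt
    have h2 : HasDerivAt (fun x : ℝ => Complex.exp (-(lam * x)))
        (Complex.exp (-(lam * x)) * (-(lam * 1))) x :=
      (((hasDerivAt_id' x).ofReal_comp).const_mul lam).neg.cexp
    convert! h2.mul h1 using 1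
    have : Complex.exp (-(lam * x)) * (Complex.exp (lam * x) * w x) = w x := by
      rw [← mul_assoc, ← Complex.exp_add]; simp
    rw [this]
    ring
  have key := re_energy_nonneg hlam hw hg hh (by simp) (by simp)
  rw [intervalIntegral.integral_of_le zero_le_one] at key
  refine key.trans_eq (congrArg Complex.re (setIntegral_congr_fun measurableSet_Ioc fun x hx => ?_))
  have hI : ∀ y : ℝ, Integrable (fun p : ℝ => Complex.exp (-(lam * (max (y - p) 0 : ℝ))) * w p)
      unitMeas := fun y =>
    (Continuous.integrableOn_Icc (by fun_prop)).mono_set Ioc_subset_Icc_self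
  simp only [sub_mul]
  rw [integral_sub (hI x) (hI 1), integral_exp_max hw ⟨hx.1.le, hx.2⟩,
    integral_exp_max hw ⟨zero_le_one, le_rfl⟩]
  congr 1
  ring

theorem prod_unitMeas : unitMeas.prod unitMeas =
    ((volume : Measure ℝ).prod volume).restrict (Ioc (0:ℝ) 1 ×ˢ Ioc (0:ℝ) 1) :=
  Measure.prod_restrict _ _

theorem ae_mem_prod : ∀ᵐ q ∂(unitMeas.prod unitMeas), q ∈ Ioc (0:ℝ) 1 ×ˢ Ioc (0:ℝ) 1 := by
  rw [prod_unitMeas]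
  exact ae_restrict_mem (measurableSet_Ioc.prod measurableSet_Ioc)

theorem integrable_unit_of_continuous {w : ℝ → ℂ} (hw : Continuous w) : Integrable w unitMeas :=
  hw.integrableOn_Icc.mono_set Ioc_subset_Icc_self

theorem integrable_prod_of_continuous {f : ℝ × ℝ → ℂ} (hf : Continuous f) :
    Integrable f (unitMeas.prod unitMeas) := by
  rw [prod_unitMeas]
  exact (hf.continuousOn.integrableOn_compact (isCompact_Icc.prod isCompact_Icc)).mono_set
    (prod_mono Ioc_subset_Icc_self Ioc_subset_Icc_self)

/-- Multiplying the form of `P` by `lapInt α ν 1` turns it into a positive superposition of the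
exponential forms with `λ = ν s`. -/
theorem re_lapInt_mul_form_nonneg {α : ℝ} (hα : α ∈ Ioo (0:ℝ) 1) {ν : ℂ} (hν : 0 ≤ ν.re)
    {w : ℝ → ℂ} (hw : Continuous w) :
    0 ≤ (lapInt α ν 1 * ∫ q, conj (w q.1) * ((kern α q.1 q.2 : ℂ) * w q.2)
      ∂(unitMeas.prod unitMeas)).re := by
  set e : ℝ × ℝ → ℝ → ℂ := fun q s => Complex.exp (-(ν * s * (max (q.1 - q.2) 0 : ℝ))) -
    Complex.exp (-(ν * s * (max (1 - q.2) 0 : ℝ))) with he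
  set F : ℝ × ℝ → ℝ → ℂ := fun q s =>
    (conj (w q.1) * w q.2) * (((s ^ (-α - 1) : ℝ) : ℂ) * e q s) with hF
  have hFi : Integrable (Function.uncurry F)
      ((unitMeas.prod unitMeas).prod (volume.restrict (Ioi (0:ℝ)))) := by
    have hb1 : Integrable (fun q : ℝ × ℝ => ‖conj (w q.1) * w q.2‖) (unitMeas.prod unitMeas) :=
      (integrable_prod_of_continuous (f := fun q => conj (w q.1) * w q.2) (by fun_prop)).norm
    have hb2 := (integrableOn_levy hα).const_mul (2 * (2 * (1 + ‖ν‖)))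
    have hb := hb1.mul_prod hb2
    refine hb.mono' ?_ ?_
    · refine Measurable.aestronglyMeasurable ?_
      have := hw.measurable
      simp only [hF, he, Function.uncurry_def]
      fun_prop
    · have h1 : ∀ᵐ z ∂((unitMeas.prod unitMeas).prod (volume.restrict (Ioi (0:ℝ)))),
          z.1 ∈ Ioc (0:ℝ) 1 ×ˢ Ioc (0:ℝ) 1 := Measure.quasiMeasurePreserving_fst.ae ae_mem_prod
      have h2 : ∀ᵐ z ∂((unitMeas.prod unitMeas).prod (volume.restrict (Ioi (0:ℝ)))),
          z.2 ∈ Ioi (0:ℝ) :=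
        Measure.quasiMeasurePreserving_snd.ae (ae_restrict_mem measurableSet_Ioi)
      filter_upwards [h1, h2] with ⟨⟨x, p⟩, s⟩ ⟨hx, hp⟩ hs
      simp only [mem_Ioc, mem_Ioi] at hx hp hs
      have e1 := norm_lap_le (α := α) hν hs (b := max (x - p) 0)
        ⟨le_max_right _ _, max_le (by linarith) zero_le_one⟩
      have e2 := norm_lap_le (α := α) hν hs (b := max (1 - p) 0)
        ⟨le_max_right _ _, max_le (by linarith) zero_le_one⟩
      simp only [hF, he, Function.uncurry_def]
      rw [norm_mul (conj (w x) * w p)]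
      refine mul_le_mul_of_nonneg_left ?_ (norm_nonneg _)
      have := (norm_sub_le _ _).trans (add_le_add e2 e1)
      refine le_trans (le_of_eq ?_) (this.trans_eq ?_)
      · congr 1
        ring
      · ring
  have h1 : lapInt α ν 1 * ∫ q, conj (w q.1) * ((kern α q.1 q.2 : ℂ) * w q.2)
      ∂(unitMeas.prod unitMeas) =
      ∫ s in Ioi (0:ℝ), ∫ q, F q s ∂(unitMeas.prod unitMeas) := by
    rw [← integral_integral_swap hFi, ← integral_const_mul]
    refine integral_congr_ae ?_
    filter_upwards [ae_mem_prod] with q hq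
    simp only [hF]
    rw [integral_const_mul, ← lapInt_mul_kern hα hν hq.1 hq.2]
    ring
  rw [h1]
  refine re_integral_nonneg ?_
  filter_upwards [ae_restrict_mem measurableSet_Ioi] with s hs
  have hs : 0 < s := hs
  have h2 : ∫ q, F q s ∂(unitMeas.prod unitMeas) = ((s ^ (-α - 1) : ℝ) : ℂ) *
      ∫ x, conj (w x) * ∫ p, e (x, p) s * w p ∂unitMeas ∂unitMeas := by
    rw [← integral_const_mul, integral_prod]
    · refine integral_congr_ae (Eventually.of_forall fun x => ?_)
      simp only [hF]
      rw [← integral_const_mul, ← integral_const_mul]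
      refine integral_congr_ae (Eventually.of_forall fun p => ?_)
      simp only
      ring
    · refine integrable_prod_of_continuous ?_
      simp only [hF, he]
      fun_prop
  rw [h2, Complex.re_ofReal_mul]
  refine mul_nonneg (Real.rpow_nonneg hs.le _) ?_
  refine re_exp_form_nonneg ?_ hw
  rw [Complex.re_mul_ofReal]
  positivity

/-- The constant `m` of the sector `m |Im| ≤ Re` containing the numerical range of `P`, namely
`Im Z / Re Z` with `Z = lapInt α (1 + i) 1`. -/
noncomputable def sectorSlope (α : ℝ) : ℝ :=
  (lapInt α (1 + Complex.I) 1).im / (lapInt α (1 + Complex.I) 1).re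

/-- The sector inequality for continuous `w`, from `re_lapInt_mul_form_nonneg` with `ν = 1 + i` and
`ν = 1 - i`. -/
theorem sector_of_continuous {α : ℝ} (hα : α ∈ Ioo (0:ℝ) 1) {w : ℝ → ℂ} (hw : Continuous w) :
    sectorSlope α * |(∫ q, conj (w q.1) * ((kern α q.1 q.2 : ℂ) * w q.2)
      ∂(unitMeas.prod unitMeas)).im| ≤ (∫ q, conj (w q.1) * ((kern α q.1 q.2 : ℂ) * w q.2)
      ∂(unitMeas.prod unitMeas)).re := by
  set Q := ∫ q, conj (w q.1) * ((kern α q.1 q.2 : ℂ) * w q.2) ∂(unitMeas.prod unitMeas)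
  have hA := lapInt_re_pos hα
  have hB := lapInt_im_pos hα
  have h1 := re_lapInt_mul_form_nonneg hα (ν := 1 + Complex.I) (by simp) hw
  have h2 := re_lapInt_mul_form_nonneg hα (ν := conj (1 + Complex.I)) (by simp) hw
  rw [lapInt_conj] at h2
  rw [Complex.mul_re] at h1 h2
  rw [Complex.conj_re, Complex.conj_im] at h2
  unfold sectorSlope
  rw [div_mul_eq_mul_div, div_le_iff₀ hA]
  rcases abs_cases Q.im with ⟨h, -⟩ | ⟨h, -⟩ <;> rw [h] <;> linarith

/-! ### The sector inequality on `L²(0,1)` and density of the range -/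

open scoped InnerProductSpace

theorem inner_potCLM {α : ℝ} (hα : 0 < α) (v : Lp ℂ 2 unitMeas) (y : Lp ℂ 2 unitMeas)
    {f g : ℝ → ℂ} (hf : v =ᵐ[unitMeas] f) (hg : y =ᵐ[unitMeas] g) :
    ⟪y, potCLM α hα v⟫_ℂ = ∫ x, conj (g x) * pot α f x ∂unitMeas := by
  rw [L2.inner_def]
  refine integral_congr_ae ?_
  filter_upwards [potCLM_ae hα v, hg] with x h1 h2
  rw [h1, h2, pot_congr hf, RCLike.inner_apply, mul_comm]

theorem sector_potCLM {α : ℝ} (hα : α ∈ Ioo (0:ℝ) 1) (w : Lp ℂ 2 unitMeas) :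
    sectorSlope α * |(⟪w, potCLM α hα.1 w⟫_ℂ).im| ≤ (⟪w, potCLM α hα.1 w⟫_ℂ).re := by
  refine DenseRange.induction_on
    (BoundedContinuousFunction.toLp_denseRange (p := 2) (μ := unitMeas) ℂ ℂ ENNReal.ofNat_ne_top) w ?_ ?_
  · exact isClosed_le (by fun_prop) (by fun_prop)
  · intro f
    have hf := BoundedContinuousFunction.coeFn_toLp (p := 2) (μ := unitMeas) ℂ f
    have hfc : Continuous f := f.continuous
    have h : ⟪BoundedContinuousFunction.toLp (E := ℂ) 2 unitMeas ℂ f,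
        potCLM α hα.1 (BoundedContinuousFunction.toLp (E := ℂ) 2 unitMeas ℂ f)⟫_ℂ =
        (((Real.Gamma (α + 1))⁻¹ : ℝ) : ℂ) *
          ∫ q, conj (f q.1) * ((kern α q.1 q.2 : ℂ) * f q.2) ∂(unitMeas.prod unitMeas) := by
      rw [inner_potCLM hα.1 _ _ hf hf, integral_prod, ← integral_const_mul]
      · refine integral_congr_ae (Eventually.of_forall fun x => ?_)
        simp only [pot, Complex.real_smul]
        rw [integral_const_mul]
        ring
      · refine integrable_prod_of_continuous ?_
        have := continuous_kern hα.1
        fun_prop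
    have hΓ : 0 < (Real.Gamma (α + 1))⁻¹ :=
      inv_pos.2 (Real.Gamma_pos_of_pos (by linarith [hα.1]))
    rw [h, Complex.im_ofReal_mul, Complex.re_ofReal_mul, abs_mul, abs_of_pos hΓ, mul_left_comm]
    exact mul_le_mul_of_nonneg_left (sector_of_continuous hα hfc) hΓ.le

theorem integral_mul_eq_zero_of_moments {Y : ℝ → ℂ} (hY : Integrable Y unitMeas)
    (h : ∀ n : ℕ, ∫ x, ((x ^ n : ℝ) : ℂ) * Y x ∂unitMeas = 0) {g : ℝ → ℝ} (hg : Continuous g) :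
    ∫ x, (g x : ℂ) * Y x ∂unitMeas = 0 := by
  have hint : ∀ f : ℝ → ℝ, Continuous f → Integrable (fun x => (f x : ℂ) * Y x) unitMeas := by
    intro f hf
    obtain ⟨C, hC⟩ := isCompact_Icc.exists_bound_of_continuousOn
      (f := f) (s := Icc (0:ℝ) 1) hf.continuousOn
    refine hY.bdd_mul (c := C) (by fun_prop) ?_
    filter_upwards [ae_mem_unit] with x hx
    rw [Complex.norm_real]
    exact hC x ⟨hx.1.le, hx.2⟩
  have hpoly : ∀ p : Polynomial ℝ, ∫ x, ((p.eval x : ℝ) : ℂ) * Y x ∂unitMeas = 0 := by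
    intro p
    induction p using Polynomial.induction_on' with
    | add p q hp hq =>
      simp only [Polynomial.eval_add, Complex.ofReal_add, add_mul]
      rw [integral_add (hint _ p.continuous) (hint _ q.continuous), hp, hq, add_zero]
    | monomial n a =>
      simp only [Polynomial.eval_monomial, Complex.ofReal_mul, mul_assoc]
      rw [integral_const_mul, h n, mul_zero]
  have hbound : ∀ ε : ℝ, 0 < ε →
      ‖∫ x, (g x : ℂ) * Y x ∂unitMeas‖ ≤ ε * ∫ x, ‖Y x‖ ∂unitMeas := by
    intro ε hε
    obtain ⟨p, hp⟩ := exists_polynomial_near_of_continuousOn 0 1 g hg.continuousOn ε hε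
    rw [← sub_zero (∫ x, (g x : ℂ) * Y x ∂unitMeas), ← hpoly p,
      ← integral_sub (hint g hg) (hint _ p.continuous), ← integral_const_mul]
    refine norm_integral_le_of_norm_le (hY.norm.const_mul ε) ?_
    filter_upwards [ae_mem_unit] with x hx
    rw [← sub_mul, norm_mul, ← Complex.ofReal_sub, Complex.norm_real, norm_sub_rev]
    exact mul_le_mul_of_nonneg_right (hp x ⟨hx.1.le, hx.2⟩).le (norm_nonneg _)
  have hlim : Tendsto (fun ε : ℝ => ε * ∫ x, ‖Y x‖ ∂unitMeas) (nhdsWithin 0 (Ioi 0)) (nhds 0) := by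
    have : Tendsto (fun ε : ℝ => ε * ∫ x, ‖Y x‖ ∂unitMeas) (nhds 0)
        (nhds (0 * ∫ x, ‖Y x‖ ∂unitMeas)) := (continuous_id.mul continuous_const).tendsto 0
    rw [zero_mul] at this
    exact this.mono_left nhdsWithin_le_nhds
  rw [← norm_le_zero_iff]
  refine ge_of_tendsto hlim ?_
  filter_upwards [self_mem_nhdsWithin] with ε hε
  exact hbound ε hε

/-- An integrable function on `(0,1)` all of whose moments vanish is zero almost everywhere. -/
theorem ae_zero_of_moments {Y : ℝ → ℂ} (hY : Integrable Y unitMeas)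
    (h : ∀ n : ℕ, ∫ x, ((x ^ n : ℝ) : ℂ) * Y x ∂unitMeas = 0) : ∀ᵐ x ∂unitMeas, Y x = 0 := by
  have h1 : ∀ᵐ x : ℝ, (Ioc (0:ℝ) 1).indicator Y x = 0 := by
    refine ae_eq_zero_of_integral_contDiff_smul_eq_zero
      ((integrable_indicator_iff measurableSet_Ioc).2 hY).locallyIntegrable fun g hg _ => ?_
    have h2 := integral_mul_eq_zero_of_moments hY h hg.continuous
    rw [← integral_indicator measurableSet_Ioc] at h2
    rw [← h2]
    refine integral_congr_ae (Eventually.of_forall fun x => ?_)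
    simp only [Complex.real_smul]
    by_cases hx : x ∈ Ioc (0:ℝ) 1
    · rw [indicator_of_mem hx, indicator_of_mem hx]
    · rw [indicator_of_notMem hx, indicator_of_notMem hx, mul_zero]
  filter_upwards [ae_restrict_of_ae h1, ae_mem_unit] with x hx hx1
  rwa [indicator_of_mem hx1] at hx

/-- By scaling, `P` maps `p^n` to a positive multiple of `1 - x^(n+α+1)`. -/
theorem integral_kern_pow {α : ℝ} (hα : 0 < α) (n : ℕ) :
    ∃ a : ℝ, 0 < a ∧ ∀ x ∈ Ioc (0:ℝ) 1,
      ∫ p, (kern α x p : ℂ) * ((p ^ n : ℝ) : ℂ) ∂unitMeas =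
        ((a * (1 - x ^ (α + 1) * x ^ n) : ℝ) : ℂ) := by
  have hc : ∀ x : ℝ, Continuous fun p : ℝ => (max (x - p) 0) ^ α * p ^ n := fun x =>
    (Continuous.rpow_const (by fun_prop) fun _ => Or.inr hα.le).mul (by fun_prop)
  refine ⟨∫ p in (0:ℝ)..1, (max (1 - p) 0) ^ α * p ^ n,
    intervalIntegral.intervalIntegral_pos_of_pos_on ((hc 1).intervalIntegrable _ _)
      (fun p hp => ?_) one_pos, fun x hx => ?_⟩
  · have : 0 < max (1 - p) 0 := lt_max_of_lt_left (by linarith [hp.2])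
    have := hp.1
    positivity
  · have hx0 := hx.1
    have hscale : ∫ p in (0:ℝ)..1, (max (x - p) 0) ^ α * p ^ n =
        x ^ (α + 1) * x ^ n * ∫ p in (0:ℝ)..1, (max (1 - p) 0) ^ α * p ^ n := by
      have h1 := intervalIntegral.integral_add_adjacent_intervals
        ((hc x).intervalIntegrable (μ := volume) 0 x) ((hc x).intervalIntegrable x 1)
      have h2 : ∫ p in x..1, (max (x - p) 0) ^ α * p ^ n = 0 := by
        rw [← intervalIntegral.integral_zero (μ := volume) (a := x) (b := 1) (E := ℝ)]
        refine intervalIntegral.integral_congr fun p hp => ?_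
        rw [uIcc_of_le hx.2] at hp
        simp [max_eq_right (sub_nonpos.2 hp.1), Real.zero_rpow hα.ne']
      have h3 := intervalIntegral.mul_integral_comp_mul_left (a := 0) (b := 1)
        (f := fun p : ℝ => (max (x - p) 0) ^ α * p ^ n) x
      rw [mul_zero, mul_one] at h3
      rw [← h1, h2, add_zero, ← h3, ← intervalIntegral.integral_const_mul,
        ← intervalIntegral.integral_const_mul]
      refine intervalIntegral.integral_congr fun p _ => ?_
      have h4 : max (x - x * p) 0 = x * max (1 - p) 0 := by
        rw [mul_max_of_nonneg _ _ hx0.le]; ring_nf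
      simp only [h4]
      rw [Real.mul_rpow hx0.le (le_max_right _ _), Real.rpow_add_one hx0.ne', mul_pow]
      ring
    simp only [← Complex.ofReal_mul]
    rw [integral_complex_ofReal, ← intervalIntegral.integral_of_le zero_le_one]
    congr 1
    simp only [kern, sub_mul]
    rw [intervalIntegral.integral_sub ((hc 1).intervalIntegrable _ _)
      ((hc x).intervalIntegrable _ _), hscale]
    ring

/-- If `y` is orthogonal to the range of `P`, then all moments of `x^(α+1) conj (y x)` equal
`∫ conj y`, since `y ⊥ 1 - x^(n+α+1)`. -/
theorem moments_eq {α : ℝ} (hα : 0 < α) {y : Lp ℂ 2 unitMeas}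
    (hy : ∀ v, ⟪y, potCLM α hα v⟫_ℂ = 0) (n : ℕ) :
    ∫ x, ((x ^ n : ℝ) : ℂ) * (((x ^ (α + 1) : ℝ) : ℂ) * conj (y x)) ∂unitMeas =
      ∫ x, conj (y x) ∂unitMeas := by
  obtain ⟨a, ha, hk⟩ := integral_kern_pow hα n
  have hmem : MemLp (fun p : ℝ => ((p ^ n : ℝ) : ℂ)) 2 unitMeas := by
    refine MemLp.of_bound (Measurable.aestronglyMeasurable (by fun_prop)) 1 ?_
    filter_upwards [ae_mem_unit] with x hx
    rw [Complex.norm_real, norm_pow, Real.norm_of_nonneg hx.1.le]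
    exact pow_le_one₀ hx.1.le hx.2
  have h := hy hmem.toLp
  rw [inner_potCLM hα _ _ hmem.coeFn_toLp EventuallyEq.rfl] at h
  have hyi : Integrable (fun x => conj (y x)) unitMeas := by
    have := integrable_of_Lp y
    exact this.congr' (Complex.continuous_conj.comp_aestronglyMeasurable this.1) (by simp)
  have hyx : Integrable (fun x : ℝ => ((x ^ n : ℝ) : ℂ) * (((x ^ (α + 1) : ℝ) : ℂ) * conj (y x)))
      unitMeas := by
    simp only [← mul_assoc]
    refine hyi.bdd_mul (c := 1) (Measurable.aestronglyMeasurable (by fun_prop)) ?_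
    filter_upwards [ae_mem_unit] with x hx
    rw [← Complex.ofReal_mul, Complex.norm_real, norm_mul, norm_pow,
      Real.norm_of_nonneg hx.1.le, Real.norm_of_nonneg (Real.rpow_nonneg hx.1.le _)]
    exact mul_le_one₀ (pow_le_one₀ hx.1.le hx.2) (Real.rpow_nonneg hx.1.le _)
      (Real.rpow_le_one hx.1.le hx.2 (by linarith))
  have hΓ : (Real.Gamma (α + 1))⁻¹ ≠ 0 :=
    inv_ne_zero (Real.Gamma_pos_of_pos (by linarith)).ne'
  have h2 : ∫ x, conj (y x) * pot α (fun p : ℝ => ((p ^ n : ℝ) : ℂ)) x ∂unitMeas =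
      (((Real.Gamma (α + 1))⁻¹ * a : ℝ) : ℂ) * ((∫ x, conj (y x) ∂unitMeas) -
        ∫ x, ((x ^ n : ℝ) : ℂ) * (((x ^ (α + 1) : ℝ) : ℂ) * conj (y x)) ∂unitMeas) := by
    rw [← integral_sub hyi hyx, ← integral_const_mul]
    refine integral_congr_ae ?_
    filter_upwards [ae_mem_unit] with x hx
    simp only [pot]
    rw [hk x hx, Complex.real_smul]
    push_cast
    ring
  rw [h2, mul_eq_zero] at h
  rcases h with h | h
  · exact absurd (Complex.ofReal_eq_zero.1 h) (mul_ne_zero hΓ ha.ne')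
  · exact (sub_eq_zero.1 h).symm

theorem denseRange_potCLM {α : ℝ} (hα : 0 < α) : DenseRange (potCLM α hα) := by
  have hK : (LinearMap.range (potCLM α hα).toLinearMap)ᗮ = ⊥ := by
    rw [Submodule.eq_bot_iff]
    intro y hy
    rw [Submodule.mem_orthogonal'] at hy
    have hy' : ∀ v, ⟪y, potCLM α hα v⟫_ℂ = 0 := fun v => hy _ ⟨v, rfl⟩
    have hyi : Integrable (fun x => conj (y x)) unitMeas := by
      have := integrable_of_Lp y
      exact this.congr' (Complex.continuous_conj.comp_aestronglyMeasurable this.1) (by simp)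
    have hY : Integrable (fun x : ℝ => ((x ^ (α + 1) : ℝ) : ℂ) * conj (y x)) unitMeas := by
      refine hyi.bdd_mul (c := 1) (Measurable.aestronglyMeasurable (by fun_prop)) ?_
      filter_upwards [ae_mem_unit] with x hx
      rw [Complex.norm_real, Real.norm_of_nonneg (Real.rpow_nonneg hx.1.le _)]
      exact Real.rpow_le_one hx.1.le hx.2 (by linarith)
    -- The moments do not depend on `n`, and they tend to `0` because `x ^ n → 0` for `x < 1`.
    have hC : ∫ x, conj (y x) ∂unitMeas = 0 := by
      have hlim : Tendsto (fun n : ℕ => ∫ x, ((x ^ n : ℝ) : ℂ) *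
          (((x ^ (α + 1) : ℝ) : ℂ) * conj (y x)) ∂unitMeas) atTop (nhds (∫ _, (0:ℂ) ∂unitMeas)) := by
        refine tendsto_integral_of_dominated_convergence
          (fun x => ‖((x ^ (α + 1) : ℝ) : ℂ) * conj (y x)‖) (fun n => ?_) hY.norm (fun n => ?_) ?_
        · exact (Measurable.aestronglyMeasurable (by fun_prop)).mul hY.1
        · filter_upwards [ae_mem_unit] with x hx
          rw [norm_mul]
          refine mul_le_of_le_one_left (norm_nonneg _) ?_
          rw [Complex.norm_real, norm_pow, Real.norm_of_nonneg hx.1.le]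
          exact pow_le_one₀ hx.1.le hx.2
        · have hne : ∀ᵐ x ∂unitMeas, x ≠ 1 := ae_restrict_of_ae (Measure.ae_ne volume 1)
          filter_upwards [ae_mem_unit, hne] with x hx hx1
          have h1 : Tendsto (fun n : ℕ => ((x ^ n : ℝ) : ℂ)) atTop (nhds ((0:ℝ) : ℂ)) :=
            (Complex.continuous_ofReal.tendsto 0).comp
              (tendsto_pow_atTop_nhds_zero_of_lt_one hx.1.le (lt_of_le_of_ne hx.2 hx1))
          simpa using h1.mul_const (((x ^ (α + 1) : ℝ) : ℂ) * conj (y x))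
      simp only [moments_eq hα hy', integral_zero] at hlim
      exact tendsto_nhds_unique tendsto_const_nhds hlim
    have h0 := ae_zero_of_moments hY fun n => (moments_eq hα hy' n).trans hC
    rw [Lp.eq_zero_iff_ae_eq_zero]
    filter_upwards [h0, ae_mem_unit] with x hx hx1
    have hp : ((x ^ (α + 1) : ℝ) : ℂ) ≠ 0 :=
      Complex.ofReal_ne_zero.2 (Real.rpow_pos_of_pos hx1.1 _).ne'
    simpa [hp] using hx
  rw [← Submodule.topologicalClosure_eq_top_iff, ← Submodule.dense_iff_topologicalClosure_eq_top]
    at hK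
  rwa [LinearMap.coe_range] at hK

/-! ### Conclusion -/

theorem L2normSq_eq {f : ℝ → ℂ} {v : Lp ℂ 2 unitMeas} (h : f =ᵐ[unitMeas] v) :
    L2normSq f = ‖v‖ ^ 2 := by
  have h1 : ((‖v‖ ^ 2 : ℝ) : ℂ) = ((L2normSq f : ℝ) : ℂ) := by
    have h2 := inner_self_eq_norm_sq_to_K (𝕜 := ℂ) v
    rw [L2.inner_def] at h2
    unfold L2normSq
    rw [intervalIntegral.integral_of_le zero_le_one, ← integral_complex_ofReal, Complex.ofReal_pow]
    refine h2.symm.trans (integral_congr_ae ?_)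
    filter_upwards [h] with x hx
    rw [inner_self_eq_norm_sq_to_K, hx]
    norm_cast
  exact (Complex.ofReal_injective h1).symm

theorem memLp_of_sqIntOn {f : ℝ → ℂ} (hf : SqIntOn f) : MemLp f 2 unitMeas :=
  (memLp_two_iff_integrable_sq_norm hf.1).2 hf.2

/-- solvability of u_t = (d/dx)D^a u, u_x(0,t) = 0, u(1,t) = 0,
u(.,0) = u0, for initial data u0 in L2(0,1): there is c > 0 (independent of u0)
such that for every u0 in L2(0,1) there are u(t,.) and w(t,.) = u_t(t,.) with
(i) t -> u(t) continuous in L2 on [0,T] with u(0) = u0 in L2;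
(ii) for every t in (0,T] some representative U of u(t) lies, together with w(t),
in the graph of A = (d/dx)D^a;
(iii) u is differentiable in L2 at each t in (0,T] with derivative w(t);
(iv) the smoothing estimate |u(t)| + t |w(t)| <= c |u0| holds in L2(0,1). -/
theorem statement_19 (α T : ℝ) (hα : α ∈ Set.Ioo (0:ℝ) 1) (hT : 0 < T) :
    ∃ c > (0:ℝ), ∀ u₀ : ℝ → ℂ, SqIntOn u₀ →
      ∃ u : ℝ → ℝ → ℂ, ∃ w : ℝ → ℝ → ℂ,
        (∀ t ∈ Set.Icc (0:ℝ) T,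
          Filter.Tendsto (fun s => L2normSq (fun x => u s x - u t x))
            (nhdsWithin t (Set.Icc (0:ℝ) T)) (nhds 0)) ∧
        (∀ᵐ x ∂(MeasureTheory.volume.restrict (Set.Ioc (0:ℝ) 1)), u 0 x = u₀ x) ∧
        (∀ t ∈ Set.Ioc (0:ℝ) T,
          ∃ U : ℝ → ℂ, InGraphA α U (w t) ∧
            ∀ᵐ x ∂(MeasureTheory.volume.restrict (Set.Ioc (0:ℝ) 1)), U x = u t x) ∧
        (∀ t ∈ Set.Ioc (0:ℝ) T,
          Filter.Tendsto (fun s =>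
              L2normSq (fun x => (((s - t : ℝ) : ℂ))⁻¹ * (u s x - u t x) - w t x))
            (nhdsWithin t ((Set.Ioc (0:ℝ) T) \ {t})) (nhds 0)) ∧
        (∀ t ∈ Set.Ioc (0:ℝ) T,
          Real.sqrt (L2normSq (u t)) + t * Real.sqrt (L2normSq (w t)) ≤
            c * Real.sqrt (L2normSq u₀)) := by
  set m := sectorSlope α with hmdef
  have hm : 0 < m := div_pos (lapInt_im_pos hα) (lapInt_re_pos hα)
  refine ⟨1 + (1 + m) / m, by positivity, fun u₀ hu₀ => ?_⟩
  have hu₀' := memLp_of_sqIntOn hu₀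
  obtain ⟨U, W, hUc, hU0, hPW, hUd, hest⟩ := exists_analytic_orbit (potCLM α hα.1) hm
    (sector_potCLM hα) (denseRange_potCLM hα.1) hu₀'.toLp
  refine ⟨fun t => U t, fun t => W t, fun t ht => ?_, ?_, fun t ht => ?_, fun t ht => ?_,
    fun t ht => ?_⟩
  · have h1 : ∀ s, L2normSq (fun x => U s x - U t x) = ‖U s - U t‖ ^ 2 := fun s =>
      L2normSq_eq (Lp.coeFn_sub (U s) (U t)).symm
    simp only [h1]
    have h2 : Tendsto U (nhdsWithin t (Icc 0 T)) (nhds (U t)) :=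
      (hUc t ht.1).mono_left (nhdsWithin_mono _ fun s hs => hs.1)
    simpa using ((h2.sub_const (U t)).norm).pow 2
  · simp only [hU0]
    exact hu₀'.coeFn_toLp
  · refine ⟨fun x => -pot α (W t) x, inGraphA_pot hα (Lp.memLp (W t)), ?_⟩
    have h1 := Lp.coeFn_neg (U t)
    rw [← hPW t ht.1] at h1
    filter_upwards [potCLM_ae hα.1 (W t), h1] with x h2 h3
    rw [← h2, h3, Pi.neg_apply, neg_neg]
  · have h1 : ∀ s, L2normSq (fun x => (((s - t : ℝ) : ℂ))⁻¹ * (U s x - U t x) - W t x) =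
        ‖slope U t s - W t‖ ^ 2 := by
      intro s
      refine L2normSq_eq ?_
      have hs : (s - t)⁻¹ • (U s - U t) = (((s - t : ℝ) : ℂ)⁻¹) • (U s - U t) := by
        rw [← Complex.ofReal_inv]
        exact (Complex.coe_smul _ _).symm
      rw [slope_def_module, hs]
      filter_upwards [Lp.coeFn_sub (((s - t : ℝ) : ℂ)⁻¹ • (U s - U t)) (W t),
        Lp.coeFn_smul (((s - t : ℝ) : ℂ)⁻¹) (U s - U t), Lp.coeFn_sub (U s) (U t)] with x h2 h3 h4
      rw [h2, Pi.sub_apply, h3, Pi.smul_apply, h4, Pi.sub_apply, smul_eq_mul]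
    simp only [h1]
    have h2 : Tendsto (slope U t) (nhdsWithin t (Ioc 0 T \ {t})) (nhds (W t)) :=
      (hasDerivAt_iff_tendsto_slope.1 (hUd t ht.1)).mono_left
        (nhdsWithin_mono _ fun s hs => hs.2)
    simpa using ((h2.sub_const (W t)).norm).pow 2
  · simp only [L2normSq_eq (f := U t) EventuallyEq.rfl, L2normSq_eq (f := W t) EventuallyEq.rfl,
      L2normSq_eq hu₀'.coeFn_toLp.symm]
    rw [Real.sqrt_sq (norm_nonneg _), Real.sqrt_sq (norm_nonneg _), Real.sqrt_sq (norm_nonneg _)]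
    exact hest t ht.1
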